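/- arXiv:1911.06924 — 3 statements merged into one kernel-verified Lean document; each statement's English description precedes it below -/
import Mathlib

section
/- There is a universal constant c > 0 such that the following holds for every integer n ≥ 2, every ε > 0, and every f : {0,1}^n → {0,1}. If dist(f, Mono) ≥ ε and the number of decreasing edges of f is less than ε·√n·2^n, then there exists h ∈ {0, 1, ..., ⌊log₂ n⌋} such that, setting d = 2^h, the expectation over S ~ S(1/d) of the probability over a uniformly random x ∈ {0,1}^n that Capture(x, S, f) = 1 is at least c·ε/(√n·(log₂ n)^4). -/
open Finset

attribute [local instance] Classical.propDecidable

variable {n : ℕ}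

/-- The edge of the hypercube along dimension `i` at `x` (the pair
`{x^{(i→0)}, x^{(i→1)}}`) is decreasing for `f`. -/
def decEdge (f : (Fin n → Bool) → Bool) (x : Fin n → Bool) (i : Fin n) : Prop :=
  f (Function.update x i false) = true ∧ f (Function.update x i true) = false

/-- `x` with its `i`-th coordinate flipped. -/
def flipC (x : Fin n → Bool) (i : Fin n) : Fin n → Bool := Function.update x i (!(x i))

/-- `g` is monotone. -/
def monoB (g : (Fin n → Bool) → Bool) : Prop :=
  ∀ x y : Fin n → Bool, (∀ i, x i ≤ y i) → g x ≤ g y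

/-- Distance of `f` to the set of monotone functions. -/
noncomputable def distMono (f : (Fin n → Bool) → Bool) : ℝ :=
  sInf {d : ℝ | ∃ g : (Fin n → Bool) → Bool, monoB g ∧
    d = ((univ.filter fun x => f x ≠ g x).card : ℝ) / 2 ^ n}

/-- `I_f⁻(x)`: the number of decreasing edges of `f` incident on `x`. -/
noncomputable def Iminus (f : (Fin n → Bool) → Bool) (x : Fin n → Bool) : ℕ :=
  (univ.filter fun i => decEdge f x i).card

/-- The number of decreasing edges of `f` (each edge represented by its lower
endpoint together with its dimension). -/
noncomputable def numDecEdges (f : (Fin n → Bool) → Bool) : ℕ :=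
  (univ.filter fun q : (Fin n → Bool) × Fin n => q.1 q.2 = false ∧ decEdge f q.1 q.2).card

/-- The event Capture(x, S, f). -/
def Capture (f : (Fin n → Bool) → Bool) (S : Finset (Fin n)) (x : Fin n → Bool) : Prop :=
  ∃ i ∈ S, decEdge f x i ∧ ∀ j ∈ S \ {i}, ¬ decEdge f (flipC x i) j

/-- Hamming weight of `x` restricted to the coordinates in `M`. -/
noncomputable def wt (M : Finset (Fin n)) (x : Fin n → Bool) : ℕ :=
  (M.filter fun i => x i = true).card

/-- `g` is unate. -/
def unate (g : (Fin n → Bool) → Bool) : Prop :=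
  ∃ σ : Fin n → Bool, monoB (fun x => g (fun i => xor (x i) (σ i)))

/-- Distance of `f` to the set of unate functions. -/
noncomputable def distUnate (f : (Fin n → Bool) → Bool) : ℝ :=
  sInf {d : ℝ | ∃ g : (Fin n → Bool) → Bool, unate g ∧
    d = ((univ.filter fun x => f x ≠ g x).card : ℝ) / 2 ^ n}

/-- `g` is a `k`-junta. -/
def isJunta (k : ℕ) (g : (Fin n → Bool) → Bool) : Prop :=
  ∃ J : Finset (Fin n), J.card ≤ k ∧
    ∀ x y : Fin n → Bool, (∀ i ∈ J, x i = y i) → g x = g y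

/-- Distance of `f` to the set of `k`-juntas. -/
noncomputable def distJunta (k : ℕ) (f : (Fin n → Bool) → Bool) : ℝ :=
  sInf {d : ℝ | ∃ g : (Fin n → Bool) → Bool, isJunta k g ∧
    d = ((univ.filter fun x => f x ≠ g x).card : ℝ) / 2 ^ n}

/-- `I⁻_{f,red}(x)` for the coloring `col` (an edge is identified by its lower
endpoint along its dimension; `col e i = true` means the edge along dimension `i`
at `e` is red). -/
noncomputable def IredCol (f : (Fin n → Bool) → Bool)
    (col : (Fin n → Bool) → Fin n → Bool) (x : Fin n → Bool) : ℕ :=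
  if f x = true then
    (univ.filter fun i => decEdge f x i ∧ col (Function.update x i false) i = true).card
  else 0

/-- `I⁻_{f,blue}(x)` for the coloring `col`. -/
noncomputable def IblueCol (f : (Fin n → Bool) → Bool)
    (col : (Fin n → Bool) → Fin n → Bool) (x : Fin n → Bool) : ℕ :=
  if f x = false then
    (univ.filter fun i => decEdge f x i ∧ col (Function.update x i false) i = false).card
  else 0

/-- `Ψ_M`: the middle layer of the subcube `{0,1}^M`. -/
noncomputable def PsiSet (M : Finset (Fin n)) : Finset (↥M → Bool) :=
  univ.filter fun z => (univ.filter fun i : ↥M => z i = true).card = n / 4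

/-- `x` is an erased point (for parameter `κ` and control set `M`). -/
def ErasedPt (κ : ℝ) (M : Finset (Fin n)) (x : Fin n → Bool) : Prop :=
  wt M x = n / 4 ∧ |(wt Mᶜ x : ℝ) - (n : ℝ) / 4| ≤ (n : ℝ) ^ κ

/-- `Maj(x_{M̄})`: majority on the coordinates outside `M`. -/
noncomputable def MajBar (M : Finset (Fin n)) (x : Fin n → Bool) : Bool :=
  decide (n / 4 < wt Mᶜ x)

/-- `F` is a completion of the `D⁻` instance determined by `(M, P)`. -/
def DminusCompletion (κ : ℝ) (M : Finset (Fin n)) (P : Finset (↥M → Bool))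
    (F : (Fin n → Bool) → Bool) : Prop :=
  (∀ x, wt M x < n / 4 → F x = false) ∧
  (∀ x, n / 4 < wt M x → F x = true) ∧
  (∀ x, wt M x = n / 4 → ¬ ErasedPt κ M x →
    F x = if (fun i : ↥M => x i.1) ∈ P then MajBar M x else !(MajBar M x))

/-- The function `F` of Statement 12: `F(x) = 1` iff `|x_M| > n/4`, or
`|x_M| = n/4` and `x_M ∉ P`. -/
noncomputable def DplusF (M : Finset (Fin n)) (P : Finset (↥M → Bool))
    (x : Fin n → Bool) : Bool :=
  if n / 4 < wt M x then true
  else if wt M x = n / 4 ∧ (fun i : ↥M => x i.1) ∉ P then true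
  else false


/-- `0/1` indicator that two Booleans differ. -/
noncomputable def wB (a b : Bool) : ℝ := bif xor a b then 1 else 0

/-- `0/1` value of a Boolean. -/
noncomputable def tB (a : Bool) : ℝ := bif a then 1 else 0

lemma wB_nonneg (a b : Bool) : 0 ≤ wB a b := by cases a <;> cases b <;> simp [wB]

lemma wB_sq (a b : Bool) : wB a b ^ 2 = wB a b := by cases a <;> cases b <;> simp [wB]

lemma wB_comm (a b : Bool) : wB a b = wB b a := by cases a <;> cases b <;> simp [wB]

lemma wB_self (a : Bool) : wB a a = 0 := by cases a <;> simp [wB]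

lemma wB_tri (a b c : Bool) : wB a c ≤ wB a b + wB b c := by
  cases a <;> cases b <;> cases c <;> norm_num [wB]

lemma tB_nonneg (a : Bool) : 0 ≤ tB a := by cases a <;> simp [tB]

lemma tB_le_one (a : Bool) : tB a ≤ 1 := by cases a <;> simp [tB]

lemma tB_sub_le (a b : Bool) : tB a - tB b ≤ wB a b := by
  cases a <;> cases b <;> norm_num [wB, tB]

lemma flipC_flipC (x : Fin n → Bool) (i : Fin n) : flipC (flipC x i) i = x := by
  simp [flipC]

/-- Planar Minkowski inequality for finite sums. -/
lemma sqrt_sum_le {α : Type*} (s : Finset α) (p q : α → ℝ) :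
    Real.sqrt ((∑ x ∈ s, p x) ^ 2 + (∑ x ∈ s, q x) ^ 2) ≤
      ∑ x ∈ s, Real.sqrt (p x ^ 2 + q x ^ 2) := by
  have h := norm_sum_le s (fun x => (⟨p x, q x⟩ : ℂ))
  have e : ∀ z : ℂ, ‖z‖ = Real.sqrt (z.re ^ 2 + z.im ^ 2) := by
    intro z
    rw [Complex.norm_def, Complex.normSq_apply]; ring_nf
  simp only [e, Complex.re_sum, Complex.im_sum] at h
  exact h

lemma sum_cons_bool {m : ℕ} (F : (Fin (m + 1) → Bool) → ℝ) :
    ∑ x, F x = ∑ x : Fin m → Bool, F (Fin.cons false x) + ∑ x : Fin m → Bool, F (Fin.cons true x) := by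
  have := Fintype.sum_equiv (Fin.consEquiv (fun _ : Fin (m + 1) => Bool))
    (fun q => F (Fin.cons q.1 q.2)) F (by intro q; rfl)
  rw [← this, Fintype.sum_prod_type]
  simp [add_comm]

lemma flipC_cons_succ {m : ℕ} (e : Bool) (x : Fin m → Bool) (i : Fin m) :
    flipC (Fin.cons e x : Fin (m + 1) → Bool) i.succ = Fin.cons e (flipC x i) := by
  funext k
  refine Fin.cases ?_ (fun k => ?_) k
  · simp [flipC, Function.update_apply, (Fin.succ_ne_zero i).symm]
  · simp [flipC, Function.update_apply, Fin.succ_inj]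

lemma flipC_cons_zero {m : ℕ} (e : Bool) (x : Fin m → Bool) :
    flipC (Fin.cons e x : Fin (m + 1) → Bool) 0 = Fin.cons (!e) x := by
  funext k
  refine Fin.cases ?_ (fun k => ?_) k
  · simp [flipC]
  · simp [flipC, Function.update_apply, Fin.succ_ne_zero]

lemma card_cube (m : ℕ) : (∑ _x : Fin m → Bool, (1 : ℝ)) = 2 ^ m := by
  simp

lemma tal_arith (N P0 P1 R A : ℝ) (hN : 0 < N) (h0 : 0 ≤ P0) (h0' : P0 ≤ N) (h1 : 0 ≤ P1)
    (h1' : P1 ≤ N) (hR : P0 * (N - P0) / N + P1 * (N - P1) / N ≤ R)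
    (hA : P0 - P1 ≤ A) (hA' : P1 - P0 ≤ A) :
    (P0 + P1) * (2 * N - (P0 + P1)) / (2 * N) ≤ Real.sqrt (R ^ 2 + A ^ 2) := by
  apply Real.le_sqrt_of_sq_le
  set Q := P0 * (N - P0) / N + P1 * (N - P1) / N with hQ
  set D := P0 - P1 with hD
  have e : (P0 + P1) * (2 * N - (P0 + P1)) / (2 * N) = Q + D ^ 2 / (2 * N) := by
    rw [hQ, hD]; field_simp; ring
  have hQ0 : 0 ≤ Q := by
    have : 0 ≤ N - P0 := by linarith
    have : 0 ≤ N - P1 := by linarith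
    positivity
  have hQ1 : Q ≤ N / 2 := by
    rw [hQ, ← add_div, div_le_iff₀ hN]
    nlinarith [sq_nonneg (P0 - N / 2), sq_nonneg (P1 - N / 2)]
  have hD2 : D ^ 2 ≤ N ^ 2 := by
    apply sq_le_sq'
    · linarith
    · linarith
  have hDA : D ^ 2 ≤ A ^ 2 := sq_le_sq' (by linarith) (by linarith)
  have hQR : Q ^ 2 ≤ R ^ 2 := by nlinarith
  rw [e]
  have k1 : Q * (D ^ 2 / N) ≤ D ^ 2 / 2 := by
    have : 0 ≤ D ^ 2 / N := by positivity
    calc Q * (D ^ 2 / N) ≤ (N / 2) * (D ^ 2 / N) := by gcongr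
      _ = D ^ 2 / 2 := by field_simp
  have k2 : (D ^ 2 / (2 * N)) ^ 2 ≤ D ^ 2 / 4 := by
    have : (D ^ 2 / (2 * N)) ^ 2 = D ^ 2 / (4 * N ^ 2) * D ^ 2 := by field_simp; ring
    rw [this]
    calc D ^ 2 / (4 * N ^ 2) * D ^ 2 ≤ D ^ 2 / (4 * N ^ 2) * N ^ 2 := by gcongr
      _ = D ^ 2 / 4 := by field_simp
  have : (Q + D ^ 2 / (2 * N)) ^ 2 = Q ^ 2 + Q * (D ^ 2 / N) + (D ^ 2 / (2 * N)) ^ 2 := by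
    field_simp; ring
  nlinarith [sq_nonneg D]

/-- Robust Talagrand inequality: every sensitive edge is charged to at least one endpoint. -/
theorem tal : ∀ (m : ℕ) (g : (Fin m → Bool) → Bool) (a : (Fin m → Bool) → Fin m → ℝ),
    (∀ x i, wB (g x) (g (flipC x i)) ≤ a x i + a (flipC x i) i) →
    (∑ x, tB (g x)) * (2 ^ m - ∑ x, tB (g x)) / 2 ^ m ≤ ∑ x, Real.sqrt (∑ i, a x i ^ 2) := by
  intro m
  induction m with
  | zero =>
    intro g a _
    have : ∀ b : Bool, tB b * (1 - tB b) = 0 := by intro b; cases b <;> simp [tB]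
    simp [this]
  | succ m ih =>
    intro g a h
    have I0 := ih (fun x => g (Fin.cons false x)) (fun x i => a (Fin.cons false x) i.succ) (by
      intro x i
      have := h (Fin.cons false x) i.succ
      rwa [flipC_cons_succ] at this)
    have I1 := ih (fun x => g (Fin.cons true x)) (fun x i => a (Fin.cons true x) i.succ) (by
      intro x i
      have := h (Fin.cons true x) i.succ
      rwa [flipC_cons_succ] at this)
    have hz : ∀ x : Fin m → Bool, wB (g (Fin.cons false x)) (g (Fin.cons true x)) ≤
        a (Fin.cons false x) 0 + a (Fin.cons true x) 0 := by
      intro x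
      have := h (Fin.cons false x) 0
      rwa [flipC_cons_zero] at this
    have mk := sqrt_sum_le univ (fun x : Fin (m + 1) → Bool => Real.sqrt (∑ i : Fin m, a x i.succ ^ 2))
      (fun x => a x 0)
    have e1 : ∀ x : Fin (m + 1) → Bool,
        Real.sqrt (Real.sqrt (∑ i : Fin m, a x i.succ ^ 2) ^ 2 + a x 0 ^ 2) =
        Real.sqrt (∑ i, a x i ^ 2) := by
      intro x
      rw [Real.sq_sqrt (by positivity), Fin.sum_univ_succ, add_comm]
    simp only [e1] at mk
    refine le_trans ?_ mk
    rw [sum_cons_bool (fun x => tB (g x)), sum_cons_bool (fun x => a x 0),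
      sum_cons_bool (fun x => Real.sqrt (∑ i : Fin m, a x i.succ ^ 2))]
    rw [show (2 : ℝ) ^ (m + 1) = 2 * 2 ^ m by ring]
    apply tal_arith
    · positivity
    · exact Finset.sum_nonneg fun _ _ => tB_nonneg _
    · rw [← card_cube]; exact Finset.sum_le_sum fun _ _ => tB_le_one _
    · exact Finset.sum_nonneg fun _ _ => tB_nonneg _
    · rw [← card_cube]; exact Finset.sum_le_sum fun _ _ => tB_le_one _
    · exact add_le_add I0 I1
    · rw [← Finset.sum_sub_distrib, ← Finset.sum_add_distrib]
      exact Finset.sum_le_sum fun x _ => (tB_sub_le _ _).trans (hz x)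
    · rw [← Finset.sum_sub_distrib, ← Finset.sum_add_distrib]
      exact Finset.sum_le_sum fun x _ => (tB_sub_le _ _).trans ((wB_comm _ _).le.trans (hz x))

/-- Sorting `F` along dimension `j`. -/
def sortC (j : Fin n) (F : (Fin n → Bool) → Bool) (x : Fin n → Bool) : Bool :=
  bif x j then F (Function.update x j false) || F (Function.update x j true)
  else F (Function.update x j false) && F (Function.update x j true)

/-- Sorting along a list of dimensions, head first. -/
def sortL (L : List (Fin n)) (F : (Fin n → Bool) → Bool) : (Fin n → Bool) → Bool :=
  L.foldl (fun g i => sortC i g) F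

/-- `F` has no decreasing edge along dimension `i`. -/
def iMono (i : Fin n) (F : (Fin n → Bool) → Bool) : Prop :=
  ∀ x, F (Function.update x i false) = true → F (Function.update x i true) = true

lemma sortC_false (j : Fin n) (F : (Fin n → Bool) → Bool) (x : Fin n → Bool) :
    sortC j F (Function.update x j false) =
      (F (Function.update x j false) && F (Function.update x j true)) := by
  simp [sortC]

lemma sortC_true (j : Fin n) (F : (Fin n → Bool) → Bool) (x : Fin n → Bool) :
    sortC j F (Function.update x j true) =
      (F (Function.update x j false) || F (Function.update x j true)) := by
  simp [sortC]

lemma upd_cases (j : Fin n) (x : Fin n → Bool) :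
    x = Function.update x j false ∨ x = Function.update x j true := by
  cases h : x j
  · left; rw [← h]; simp
  · right; rw [← h]; simp

lemma sortC_eq_self {i : Fin n} {F : (Fin n → Bool) → Bool} (h : iMono i F) : sortC i F = F := by
  funext x
  have hx := h x
  rcases upd_cases i x with e | e
  · rw [e, sortC_false]
    revert hx
    cases F (Function.update x i false) <;> cases F (Function.update x i true) <;> simp
  · rw [e, sortC_true]
    revert hx
    cases F (Function.update x i false) <;> cases F (Function.update x i true) <;> simp

lemma iMono_sortC_self (i : Fin n) (F : (Fin n → Bool) → Bool) : iMono i (sortC i F) := by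
  intro x
  rw [sortC_false, sortC_true]
  cases F (Function.update x i false) <;> cases F (Function.update x i true) <;> simp

lemma iMono_sortC {i : Fin n} (j : Fin n) {F : (Fin n → Bool) → Bool} (h : iMono i F) :
    iMono i (sortC j F) := by
  by_cases hij : i = j
  · subst hij; exact iMono_sortC_self i F
  · intro x
    have h0 := h (Function.update x j false)
    have h1 := h (Function.update x j true)
    rcases upd_cases j x with e | e
    · rw [e, Function.update_comm (Ne.symm hij), Function.update_comm (Ne.symm hij),
        sortC_false, sortC_false,
        Function.update_comm hij, Function.update_comm hij, Function.update_comm hij,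
        Function.update_comm hij]
      simp only [Bool.and_eq_true]
      exact fun ⟨p, q⟩ => ⟨h0 p, h1 q⟩
    · rw [e, Function.update_comm (Ne.symm hij), Function.update_comm (Ne.symm hij),
        sortC_true, sortC_true,
        Function.update_comm hij, Function.update_comm hij, Function.update_comm hij,
        Function.update_comm hij]
      simp only [Bool.or_eq_true]
      exact fun p => p.imp h0 h1

lemma sortL_cons (i : Fin n) (L : List (Fin n)) (F : (Fin n → Bool) → Bool) :
    sortL (i :: L) F = sortL L (sortC i F) := rfl

lemma sortL_append (L L' : List (Fin n)) (F : (Fin n → Bool) → Bool) :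
    sortL (L ++ L') F = sortL L' (sortL L F) := by
  simp [sortL]

lemma iMono_sortL {i : Fin n} (L : List (Fin n)) {F : (Fin n → Bool) → Bool} (h : iMono i F) :
    iMono i (sortL L F) := by
  induction L generalizing F with
  | nil => exact h
  | cons j L ih => exact ih (iMono_sortC j h)

lemma iMono_sortL_mem {i : Fin n} (L : List (Fin n)) (F : (Fin n → Bool) → Bool) (h : i ∈ L) :
    iMono i (sortL L F) := by
  induction L generalizing F with
  | nil => simp at h
  | cons j L ih =>
    rw [sortL_cons]
    rcases List.mem_cons.1 h with rfl | h
    · exact iMono_sortL L (iMono_sortC_self _ _)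
    · exact ih _ h

lemma sortL_eq_self (L : List (Fin n)) {F : (Fin n → Bool) → Bool} (h : ∀ i ∈ L, iMono i F) :
    sortL L F = F := by
  induction L with
  | nil => rfl
  | cons j L ih =>
    rw [sortL_cons, sortC_eq_self (h j (by simp))]
    exact ih fun i hi => h i (by simp [hi])

lemma sortL_idem (L : List (Fin n)) (F : (Fin n → Bool) → Bool) :
    sortL L (sortL L F) = sortL L F :=
  sortL_eq_self L fun _ hi => iMono_sortL_mem L F hi

lemma sortL_filter_flip (L : List (Fin n)) (i : Fin n) (b : Fin n → Bool)
    {M : (Fin n → Bool) → Bool} (h : iMono i M) :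
    sortL (L.filter (flipC b i)) M = sortL (L.filter b) M := by
  induction L generalizing M with
  | nil => rfl
  | cons j L ih =>
    by_cases hij : j = i
    · subst hij
      have hs := sortC_eq_self h
      cases hb : b j
      · have hf : flipC b j j = true := by simp [flipC, hb]
        rw [List.filter_cons_of_pos (by exact hf), List.filter_cons_of_neg (by simp [hb]),
          sortL_cons, hs, ih h]
      · have hf : flipC b j j = false := by simp [flipC, hb]
        rw [List.filter_cons_of_neg (by simp [hf]), List.filter_cons_of_pos (by exact hb),
          sortL_cons, hs, ih h]
    · have hf : flipC b i j = b j := by simp [flipC, hij]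
      cases hb : b j
      · rw [List.filter_cons_of_neg (by simp [hf, hb]), List.filter_cons_of_neg (by simp [hb]), ih h]
      · rw [List.filter_cons_of_pos (by rw [hf, hb]), List.filter_cons_of_pos (by exact hb),
          sortL_cons, sortL_cons, ih (iMono_sortC j h)]

lemma sum_flip (j : Fin n) (φ : (Fin n → Bool) → ℝ) :
    ∑ x, φ (flipC x j) = ∑ x, φ x :=
  Fintype.sum_equiv (Function.Involutive.toPerm (fun x => flipC x j) (fun x => flipC_flipC x j))
    _ _ (fun _ => rfl)

lemma sum_pair_le (j : Fin n) (φ ψ : (Fin n → Bool) → ℝ)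
    (h : ∀ x, φ (Function.update x j false) + φ (Function.update x j true) ≤
      ψ (Function.update x j false) + ψ (Function.update x j true)) :
    ∑ x, φ x ≤ ∑ x, ψ x := by
  have key : ∀ x, φ x + φ (flipC x j) ≤ ψ x + ψ (flipC x j) := by
    intro x
    have hx := h x
    cases e : x j
    · have e1 : Function.update x j false = x := by rw [← e]; simp
      have e2 : flipC x j = Function.update x j true := by simp [flipC, e]
      rw [e1] at hx; rw [e2]; exact hx
    · have e1 : Function.update x j true = x := by rw [← e]; simp
      have e2 : flipC x j = Function.update x j false := by simp [flipC, e]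
      rw [e1] at hx; rw [e2]; linarith
  have := Finset.sum_le_sum (s := univ) fun x _ => key x
  rw [Finset.sum_add_distrib, Finset.sum_add_distrib, sum_flip, sum_flip] at this
  linarith

lemma sqrt_spread (p q r s : ℝ) (hr : 0 ≤ r) (hs : 0 ≤ s) (hq : 0 ≤ q) (h : p + q = r + s)
    (h1 : r ≤ p) (h2 : s ≤ p) : √p + √q ≤ √r + √s := by
  have hp : 0 ≤ p := hr.trans h1
  have h3 : q ≤ r := by linarith
  have h4 : q ≤ s := by linarith
  have hm : p * q ≤ r * s := by
    have : q = r + s - p := by linarith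
    subst this
    nlinarith [mul_nonneg (sub_nonneg.2 h1) (sub_nonneg.2 h2)]
  have hm' : √p * √q ≤ √r * √s := by
    rw [← Real.sqrt_mul hp, ← Real.sqrt_mul hr]; exact Real.sqrt_le_sqrt hm
  have a1 := Real.sq_sqrt hp
  have a2 := Real.sq_sqrt hq
  have a3 := Real.sq_sqrt hr
  have a4 := Real.sq_sqrt hs
  refine (pow_le_pow_iff_left₀ (by positivity) (by positivity) two_ne_zero).1 ?_
  nlinarith

/-- Sorting does not increase the charge potential. -/
lemma pot_sortC {ι : Type*} [Fintype ι] (j : Fin n) (F : (Fin n → Bool) → Bool)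
    (m : ι → (Fin n → Bool) → Bool) :
    ∑ x, √(∑ i, wB (sortC j F x) (sortC j (m i) x)) ≤ ∑ x, √(∑ i, wB (F x) (m i x)) := by
  apply sum_pair_le j
  intro x
  simp only [sortC_false, sortC_true]
  generalize Function.update x j false = y
  generalize Function.update x j true = z
  have nn : ∀ (G : (Fin n → Bool) → Bool) (x : Fin n → Bool), 0 ≤ ∑ i, wB (G x) (m i x) :=
    fun _ _ => Finset.sum_nonneg fun _ _ => wB_nonneg _ _
  cases hy : F y <;> cases hz : F z <;> simp only [Bool.and_true, Bool.or_true, Bool.and_false,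
    Bool.or_false]
  · rw [add_comm]
    apply sqrt_spread
    · exact Finset.sum_nonneg fun _ _ => wB_nonneg _ _
    · exact Finset.sum_nonneg fun _ _ => wB_nonneg _ _
    · exact Finset.sum_nonneg fun _ _ => wB_nonneg _ _
    · rw [← Finset.sum_add_distrib, ← Finset.sum_add_distrib]
      refine Finset.sum_congr rfl fun i _ => ?_
      cases m i y <;> cases m i z <;> norm_num [wB]
    · refine Finset.sum_le_sum fun i _ => ?_
      cases m i y <;> cases m i z <;> norm_num [wB]
    · refine Finset.sum_le_sum fun i _ => ?_
      cases m i y <;> cases m i z <;> norm_num [wB]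
  · apply add_le_add <;> apply Real.sqrt_le_sqrt <;> refine Finset.sum_le_sum fun i _ => ?_ <;>
      cases m i y <;> cases m i z <;> norm_num [wB]
  · rw [add_comm]
    apply add_le_add <;> apply Real.sqrt_le_sqrt <;> refine Finset.sum_le_sum fun i _ => ?_ <;>
      cases m i y <;> cases m i z <;> norm_num [wB]
  · apply sqrt_spread
    · exact Finset.sum_nonneg fun _ _ => wB_nonneg _ _
    · exact Finset.sum_nonneg fun _ _ => wB_nonneg _ _
    · exact Finset.sum_nonneg fun _ _ => wB_nonneg _ _
    · rw [← Finset.sum_add_distrib, ← Finset.sum_add_distrib]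
      refine Finset.sum_congr rfl fun i _ => ?_
      cases m i y <;> cases m i z <;> norm_num [wB]
    · refine Finset.sum_le_sum fun i _ => ?_
      cases m i y <;> cases m i z <;> norm_num [wB]
    · refine Finset.sum_le_sum fun i _ => ?_
      cases m i y <;> cases m i z <;> norm_num [wB]

lemma pot_sortL {ι : Type*} [Fintype ι] (L : List (Fin n)) (F : (Fin n → Bool) → Bool)
    (m : ι → (Fin n → Bool) → Bool) :
    ∑ x, √(∑ i, wB (sortL L F x) (sortL L (m i) x)) ≤ ∑ x, √(∑ i, wB (F x) (m i x)) := by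
  induction L generalizing F m with
  | nil => exact le_rfl
  | cons j L ih => exact (ih (sortC j F) (fun i => sortC j (m i))).trans (pot_sortC j F m)

lemma sqrt_wB (a b : Bool) : √(wB a b) = wB a b := by
  cases a <;> cases b <;> simp [wB]

/-- Unnormalised Hamming distance. -/
noncomputable def dd (F G : (Fin n → Bool) → Bool) : ℝ := ∑ x, wB (F x) (G x)

lemma dd_sortL (L : List (Fin n)) (F G : (Fin n → Bool) → Bool) :
    dd (sortL L F) (sortL L G) ≤ dd F G := by
  have := pot_sortL (ι := Unit) L F (fun _ => G)
  simpa [sqrt_wB, dd] using this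

lemma dd_tri (F G H : (Fin n → Bool) → Bool) : dd F H ≤ dd F G + dd G H := by
  unfold dd
  rw [← Finset.sum_add_distrib]
  exact Finset.sum_le_sum fun _ _ => wB_tri _ _ _

lemma dd_eq_card (F G : (Fin n → Bool) → Bool) :
    dd F G = ((univ.filter fun x => F x ≠ G x).card : ℝ) := by
  rw [dd, Finset.card_filter]
  push_cast
  refine Finset.sum_congr rfl fun x _ => ?_
  cases F x <;> cases G x <;> simp [wB]

lemma distMono_eq (F : (Fin n → Bool) → Bool) :
    distMono F = sInf {d : ℝ | ∃ g : (Fin n → Bool) → Bool, monoB g ∧ d = dd F g / 2 ^ n} := by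
  simp only [dd_eq_card]; rfl

lemma distMono_bdd (F : (Fin n → Bool) → Bool) :
    BddBelow {d : ℝ | ∃ g : (Fin n → Bool) → Bool, monoB g ∧ d = dd F g / 2 ^ n} := by
  refine ⟨0, ?_⟩
  rintro d ⟨g, _, rfl⟩
  exact div_nonneg (Finset.sum_nonneg fun _ _ => wB_nonneg _ _) (by positivity)

lemma distMono_nonempty (F : (Fin n → Bool) → Bool) :
    {d : ℝ | ∃ g : (Fin n → Bool) → Bool, monoB g ∧ d = dd F g / 2 ^ n}.Nonempty :=
  ⟨_, fun _ => false, fun _ _ _ => le_rfl, rfl⟩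

lemma distMono_nonneg (F : (Fin n → Bool) → Bool) : 0 ≤ distMono F := by
  rw [distMono_eq]
  apply Real.sInf_nonneg
  rintro d ⟨g, _, rfl⟩
  exact div_nonneg (Finset.sum_nonneg fun _ _ => wB_nonneg _ _) (by positivity)

lemma distMono_le (F G : (Fin n → Bool) → Bool) :
    distMono F ≤ distMono G + dd F G / 2 ^ n := by
  rw [← sub_le_iff_le_add, distMono_eq G]
  apply le_csInf (distMono_nonempty G)
  rintro d ⟨g, hg, rfl⟩
  rw [sub_le_iff_le_add, distMono_eq F]
  refine (csInf_le (distMono_bdd F) ⟨g, hg, rfl⟩).trans ?_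
  rw [← add_div]
  have := dd_tri F G g
  gcongr
  linarith

lemma distMono_of_mono (F : (Fin n → Bool) → Bool) (h : monoB F) : distMono F ≤ 0 := by
  rw [distMono_eq]
  refine csInf_le (distMono_bdd F) ⟨F, h, ?_⟩
  simp [dd, wB_self]

lemma monoB_of_iMono (F : (Fin n → Bool) → Bool) (h : ∀ i, iMono i F) : monoB F := by
  intro x y hxy
  have key : ∀ s : Finset (Fin n), F x = true → F (fun i => if i ∈ s then y i else x i) = true := by
    intro s
    induction s using Finset.induction_on with
    | empty => simp
    | insert a s ha ih =>
      intro hF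
      have h1 := ih hF
      set z : Fin n → Bool := fun i => if i ∈ s then y i else x i with hz
      have e : (fun i => if i ∈ insert a s then y i else x i) = Function.update z a (y a) := by
        funext i
        by_cases hi : i = a
        · subst hi; simp
        · simp [hi, hz]
      rw [e]
      have za : z a = x a := by simp [hz, ha]
      cases hya : y a
      · have hxa : x a = false := by
          have := hxy a; rw [hya] at this; revert this; cases x a <;> simp
        rw [← hxa, ← za]; simpa using h1
      · rcases upd_cases a z with e' | e'
        · rw [e'] at h1; exact h a z h1
        · rw [← e']; exact h1
  have := key univ
  simp only [Finset.mem_univ, if_true] at this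
  cases hF : F x
  · exact Bool.false_le _
  · rw [this hF]

lemma antipodal (g : (Fin n → Bool) → Bool) :
    ∑ b, wB (g b) (g (fun i => !(b i))) ≤
      4 * ((∑ x, tB (g x)) * (2 ^ n - ∑ x, tB (g x)) / 2 ^ n) := by
  have inv : ∑ b : Fin n → Bool, tB (g (fun i => !(b i))) = ∑ b, tB (g b) :=
    Fintype.sum_equiv (Function.Involutive.toPerm (fun (b : Fin n → Bool) i => !(b i))
      (fun b => by funext i; simp)) _ _ (fun _ => rfl)
  have h1 : ∑ b, wB (g b) (g (fun i => !(b i))) ≤ 2 * ∑ x, tB (g x) := by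
    rw [two_mul]
    nth_rewrite 2 [← inv]
    rw [← Finset.sum_add_distrib]
    refine Finset.sum_le_sum fun b _ => ?_
    cases g b <;> cases g (fun i => !(b i)) <;> norm_num [wB, tB]
  have h2 : ∑ b, wB (g b) (g (fun i => !(b i))) ≤ 2 * (2 ^ n - ∑ x, tB (g x)) := by
    have : 2 * (2 ^ n - ∑ x, tB (g x)) = ∑ b, ((1 - tB (g b)) + (1 - tB (g (fun i => !(b i))))) := by
      rw [Finset.sum_add_distrib, Finset.sum_sub_distrib, Finset.sum_sub_distrib, inv, card_cube]
      ring
    rw [this]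
    refine Finset.sum_le_sum fun b _ => ?_
    cases g b <;> cases g (fun i => !(b i)) <;> norm_num [wB, tB]
  have hN : (0 : ℝ) < 2 ^ n := by positivity
  have hP0 : 0 ≤ ∑ x, tB (g x) := Finset.sum_nonneg fun _ _ => tB_nonneg _
  have hP1 : ∑ x, tB (g x) ≤ 2 ^ n := by
    rw [← card_cube]; exact Finset.sum_le_sum fun _ _ => tB_le_one _
  generalize (∑ x, tB (g x)) = P at *
  generalize (2 : ℝ) ^ n = N at *
  rw [← mul_div_assoc, le_div_iff₀ hN]
  rcases le_total P (N / 2) with h | h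
  · nlinarith
  · nlinarith

lemma tracker_bound (f : (Fin n → Bool) → Bool) (M : Fin n → (Fin n → Bool) → Bool)
    (hM : ∀ i, iMono i (M i)) (L : List (Fin n)) :
    ∑ b : Fin n → Bool, dd (sortL (L.filter b) f) (sortL (L.filter (fun i => !(b i))) f) ≤
      4 * (2 ^ n * ∑ x, √(∑ i, wB (f x) (M i x))) := by
  unfold dd
  rw [Finset.sum_comm]
  have h1 : ∀ x : Fin n → Bool,
      ∑ b : Fin n → Bool, wB (sortL (L.filter b) f x) (sortL (L.filter (fun i => !(b i))) f x) ≤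
      4 * ∑ b : Fin n → Bool, √(∑ i, wB (sortL (L.filter b) f x) (sortL (L.filter b) (M i) x)) := by
    intro x
    refine (antipodal (fun b => sortL (L.filter b) f x)).trans ?_
    have := tal n (fun b => sortL (L.filter b) f x)
      (fun b i => wB (sortL (L.filter b) f x) (sortL (L.filter b) (M i) x)) (by
        intro b i
        rw [sortL_filter_flip L i b (hM i)]
        refine (wB_tri _ (sortL (L.filter b) (M i) x) _).trans ?_
        rw [wB_comm (sortL (L.filter b) (M i) x)])
    simp only [wB_sq] at this
    linarith
  refine (Finset.sum_le_sum fun x _ => h1 x).trans ?_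
  rw [← Finset.mul_sum, Finset.sum_comm]
  gcongr
  refine (Finset.sum_le_sum fun b _ => pot_sortL (L.filter b) f M).trans ?_
  simp

/-- Average over a random sublist. -/
noncomputable def opA (ψ : List (Fin n) → ℝ) (L : List (Fin n)) : ℝ :=
  (∑ b : Fin n → Bool, ψ (L.filter b)) / 2 ^ n

/-- Average over a random stable bipartition of the list. -/
noncomputable def opB (ψ : List (Fin n) → ℝ) (L : List (Fin n)) : ℝ :=
  (∑ b : Fin n → Bool, ψ (L.filter b ++ L.filter (fun i => !(b i)))) / 2 ^ n

lemma opA_mono {ψ χ : List (Fin n) → ℝ} {c : ℝ} (h : ∀ L, ψ L ≤ χ L + c) (L : List (Fin n)) :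
    opA ψ L ≤ opA χ L + c := by
  unfold opA
  rw [div_add' _ _ _ (by positivity)]
  gcongr
  refine (Finset.sum_le_sum fun b _ => h _).trans ?_
  rw [Finset.sum_add_distrib]
  simp [mul_comm]

lemma opB_mono {ψ χ : List (Fin n) → ℝ} {c : ℝ} (h : ∀ L, ψ L ≤ χ L + c) (L : List (Fin n)) :
    opB ψ L ≤ opB χ L + c := by
  unfold opB
  rw [div_add' _ _ _ (by positivity)]
  gcongr
  refine (Finset.sum_le_sum fun b _ => h _).trans ?_
  rw [Finset.sum_add_distrib]
  simp [mul_comm]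

lemma opAB_comm : Function.Commute (opA (n := n)) opB := by
  intro ψ
  funext L
  unfold opA opB
  rw [← Finset.sum_div, ← Finset.sum_div, Finset.sum_comm]
  congr 2
  refine Finset.sum_congr rfl fun b _ => Finset.sum_congr rfl fun b' _ => ?_
  rw [List.filter_append, List.filter_filter, List.filter_filter, List.filter_filter,
    List.filter_filter]
  simp only [Bool.and_comm]

lemma opA_le_opB (f : (Fin n → Bool) → Bool) (M : Fin n → (Fin n → Bool) → Bool)
    (hM : ∀ i, iMono i (M i)) (L : List (Fin n)) :
    opA (fun L => distMono (sortL L f)) L ≤ opB (fun L => distMono (sortL L f)) L +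
      8 * (∑ x, √(∑ i, wB (f x) (M i x))) / 2 ^ n := by
  have tb := tracker_bound f M hM L
  set Φ := ∑ x, √(∑ i, wB (f x) (M i x))
  unfold opA opB
  rw [← add_div]
  gcongr
  have h1 : ∀ b : Fin n → Bool, distMono (sortL (L.filter b) f) ≤
      distMono (sortL (L.filter b ++ L.filter (fun i => !(b i))) f) +
        2 * dd (sortL (L.filter b) f) (sortL (L.filter (fun i => !(b i))) f) / 2 ^ n := by
    intro b
    refine (distMono_le _ (sortL (L.filter b ++ L.filter (fun i => !(b i))) f)).trans ?_
    gcongr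
    rw [sortL_append]
    refine (dd_tri _ (sortL (L.filter (fun i => !(b i))) f) _).trans ?_
    have := dd_sortL (L.filter (fun i => !(b i))) (sortL (L.filter (fun i => !(b i))) f)
      (sortL (L.filter b) f)
    rw [sortL_idem] at this
    have e : dd (sortL (L.filter (fun i => !(b i))) f) (sortL (L.filter b) f) =
        dd (sortL (L.filter b) f) (sortL (L.filter (fun i => !(b i))) f) := by
      unfold dd; exact Finset.sum_congr rfl fun _ _ => wB_comm _ _
    linarith
  refine (Finset.sum_le_sum fun b _ => h1 b).trans ?_
  rw [Finset.sum_add_distrib, ← Finset.sum_div, ← Finset.mul_sum]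
  gcongr
  rw [div_le_iff₀ (by positivity)]
  linarith

lemma opA_iter_le (φ : List (Fin n) → ℝ) (κ : ℝ) (h : ∀ L, opA φ L ≤ opB φ L + κ) (k : ℕ) :
    ∀ L, opA^[k] φ L ≤ opB^[k] φ L + k * κ := by
  have hB : ∀ (k : ℕ) (ψ χ : List (Fin n) → ℝ) (c : ℝ), (∀ L, ψ L ≤ χ L + c) →
      ∀ L, opB^[k] ψ L ≤ opB^[k] χ L + c := by
    intro k
    induction k with
    | zero => intro ψ χ c h; exact h
    | succ k ih => intro ψ χ c h; exact ih _ _ _ (opB_mono h)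
  induction k with
  | zero => intro L; simp
  | succ k ih =>
    intro L
    rw [Function.iterate_succ_apply']
    refine (opA_mono ih L).trans ?_
    rw [(opAB_comm.iterate_right k) φ]
    have := hB k (opA φ) (opB φ) κ h L
    rw [Function.iterate_succ_apply]
    push_cast
    linarith

lemma opB_iter_nonpos (φ : List (Fin n) → ℝ) (h : ∀ L, (∀ i, i ∈ L) → φ L ≤ 0) (k : ℕ) :
    ∀ L, (∀ i, i ∈ L) → opB^[k] φ L ≤ 0 := by
  induction k with
  | zero => exact h
  | succ k ih =>
    intro L hL
    rw [Function.iterate_succ_apply']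
    unfold opB
    apply div_nonpos_of_nonpos_of_nonneg _ (by positivity)
    refine Finset.sum_nonpos fun b _ => ih _ fun i => ?_
    simp only [List.mem_append, List.mem_filter, hL i, true_and]
    cases b i <;> simp

lemma sum_tB_coord (j : Fin n) : 2 * ∑ b : Fin n → Bool, tB (b j) = 2 ^ n := by
  have := sum_flip j (fun b => tB (b j))
  rw [two_mul]
  nth_rewrite 1 [← this]
  rw [← Finset.sum_add_distrib, ← card_cube]
  refine Finset.sum_congr rfl fun b _ => ?_
  cases h : b j <;> simp [flipC, h, tB]

lemma sum_length_filter (L : List (Fin n)) :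
    2 * ∑ b : Fin n → Bool, ((L.filter b).length : ℝ) = 2 ^ n * L.length := by
  induction L with
  | nil => simp
  | cons j L ih =>
    have : ∀ b : Fin n → Bool, (((j :: L).filter b).length : ℝ) = tB (b j) + (L.filter b).length := by
      intro b
      cases h : b j
      · rw [List.filter_cons_of_neg (by simp [h])]; simp [tB]
      · rw [List.filter_cons_of_pos (by exact h)]; simp [tB, add_comm]
    simp only [this]
    rw [Finset.sum_add_distrib, mul_add, ih, sum_tB_coord]
    simp; ring

lemma opA_iter_ge (φ : List (Fin n) → ℝ) (h : ∀ L, 0 ≤ φ L) (k : ℕ) :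
    ∀ L, φ [] * (1 - L.length / 2 ^ k) ≤ opA^[k] φ L := by
  induction k with
  | zero =>
    intro L
    cases L with
    | nil => simp
    | cons j L =>
      have h0 := h []
      have h1 := h (j :: L)
      simp only [List.length_cons, Function.iterate_zero, id]
      push_cast
      have : (0 : ℝ) ≤ L.length := by positivity
      nlinarith
  | succ k ih =>
    intro L
    rw [Function.iterate_succ_apply']
    unfold opA
    rw [le_div_iff₀ (by positivity)]
    refine le_trans ?_ (Finset.sum_le_sum fun b _ => ih (L.filter b))
    rw [← Finset.mul_sum, mul_assoc, Finset.sum_sub_distrib, ← Finset.sum_div, card_cube]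
    have := sum_length_filter L
    have e : ∑ b : Fin n → Bool, ((L.filter b).length : ℝ) = 2 ^ n * L.length / 2 := by linarith
    rw [e]
    apply le_of_eq
    field_simp
    ring

/-- Robust directed isoperimetric inequality. -/
theorem robust_directed (f : (Fin n → Bool) → Bool) (M : Fin n → (Fin n → Bool) → Bool)
    (hM : ∀ i, iMono i (M i)) (k : ℕ) (hk : 2 * n ≤ 2 ^ k) :
    distMono f * 2 ^ n ≤ 16 * k * ∑ x, √(∑ i, wB (f x) (M i x)) := by
  set Φ := ∑ x, √(∑ i, wB (f x) (M i x)) with hΦ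
  have h1 := opA_iter_ge (fun L => distMono (sortL L f)) (fun L => distMono_nonneg _) k
    (List.finRange n)
  have h2 := opA_iter_le (fun L => distMono (sortL L f)) (8 * Φ / 2 ^ n)
    (opA_le_opB f M hM) k (List.finRange n)
  have h3 := opB_iter_nonpos (fun L => distMono (sortL L f)) (by
    intro L hL
    exact distMono_of_mono _ (monoB_of_iMono _ fun i => iMono_sortL_mem L f (hL i))) k
    (List.finRange n) (fun i => List.mem_finRange i)
  have h4 : distMono f * (1 - n / 2 ^ k) ≤ k * (8 * Φ / 2 ^ n) := by
    have : sortL [] f = f := rfl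
    simp only [this, List.length_finRange] at h1
    linarith
  have h5 : (n : ℝ) / 2 ^ k ≤ 1 / 2 := by
    rw [div_le_div_iff₀ (by positivity) (by norm_num)]
    have : ((2 * n : ℕ) : ℝ) ≤ ((2 ^ k : ℕ) : ℝ) := by exact_mod_cast hk
    push_cast at this
    linarith
  have h6 := distMono_nonneg f
  have h7 : distMono f * (1 / 2) ≤ k * (8 * Φ / 2 ^ n) := by
    refine le_trans ?_ h4
    gcongr
    linarith
  have hN : (0 : ℝ) < 2 ^ n := by positivity
  have h8 : (k : ℝ) * (8 * Φ / 2 ^ n) * 2 ^ n = 8 * k * Φ := by field_simp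
  nlinarith

lemma decEdge_update (f : (Fin n → Bool) → Bool) (x : Fin n → Bool) (i : Fin n) (e : Bool) :
    decEdge f (Function.update x i e) i ↔ decEdge f x i := by
  simp [decEdge]

lemma decEdge_flip (f : (Fin n → Bool) → Bool) (x : Fin n → Bool) (i : Fin n) :
    decEdge f (flipC x i) i ↔ decEdge f x i := decEdge_update f x i _

/-- The interpolating function for dimension `i`: on decreasing edges both values are set to
the value of `f` at the endpoint with fewer decreasing edges. -/
noncomputable def Mfun (f : (Fin n → Bool) → Bool) (i : Fin n) (x : Fin n → Bool) : Bool :=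
  if decEdge f x i then
    (if Iminus f (Function.update x i true) ≤ Iminus f (Function.update x i false) then false
      else true)
  else f x

lemma iMono_Mfun (f : (Fin n → Bool) → Bool) (i : Fin n) : iMono i (Mfun f i) := by
  intro x
  unfold Mfun
  simp only [decEdge_update, Function.update_idem]
  by_cases h : decEdge f x i
  · simp [h]
  · simp only [h, if_false]
    intro h0
    by_contra h1
    exact h ⟨h0, by simpa using h1⟩

/-- Dimensions charged to `x`. -/
noncomputable def Rset (f : (Fin n → Bool) → Bool) (x : Fin n → Bool) : Finset (Fin n) :=
  univ.filter fun i => decEdge f x i ∧ Iminus f (flipC x i) ≤ Iminus f x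

lemma wB_Mfun_le (f : (Fin n → Bool) → Bool) (x : Fin n → Bool) (i : Fin n) :
    wB (f x) (Mfun f i x) ≤ if i ∈ Rset f x then 1 else 0 := by
  by_cases h : decEdge f x i
  · cases e : x i
    · have e1 : Function.update x i false = x := by rw [← e]; simp
      have e2 : flipC x i = Function.update x i true := by simp [flipC, e]
      have fx : f x = true := by rw [← h.1, e1]
      simp only [Mfun, Rset, h, if_true, e1, e2, Finset.mem_filter, Finset.mem_univ, true_and]
      split_ifs <;> simp [wB, fx]
    · have e1 : Function.update x i true = x := by rw [← e]; simp
      have e2 : flipC x i = Function.update x i false := by simp [flipC, e]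
      have fx : f x = false := by rw [← h.2, e1]
      simp only [Mfun, Rset, h, if_true, e1, e2, Finset.mem_filter, Finset.mem_univ, true_and]
      split_ifs <;> first | (simp [wB, fx]; done) | (exfalso; omega)
  · simp only [Mfun, h, if_false, wB_self]
    split_ifs <;> norm_num

lemma Rset_card_le (f : (Fin n → Bool) → Bool) (x : Fin n → Bool) :
    (Rset f x).card ≤ Iminus f x :=
  Finset.card_le_card fun i hi => by
    simp only [Rset, Finset.mem_filter] at hi ⊢
    exact ⟨hi.1, hi.2.1⟩

lemma Phi_le (f : (Fin n → Bool) → Bool) :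
    ∑ x, √(∑ i, wB (f x) (Mfun f i x)) ≤ ∑ x, √((Rset f x).card : ℝ) := by
  refine Finset.sum_le_sum fun x _ => Real.sqrt_le_sqrt ?_
  refine (Finset.sum_le_sum fun i _ => wB_Mfun_le f x i).trans ?_
  rw [Finset.sum_ite_mem]
  simp

lemma sum_Iminus (f : (Fin n → Bool) → Bool) :
    ∑ x, (Iminus f x : ℝ) = 2 * (numDecEdges f : ℝ) := by
  have h1 : ∀ x, (Iminus f x : ℝ) = ∑ i, if decEdge f x i then (1 : ℝ) else 0 := by
    intro x; simp [Iminus]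
  have h2 : (numDecEdges f : ℝ) =
      ∑ x : Fin n → Bool, ∑ i, if x i = false ∧ decEdge f x i then (1 : ℝ) else 0 := by
    rw [← Fintype.sum_prod_type' (f := fun (x : Fin n → Bool) i =>
      if x i = false ∧ decEdge f x i then (1 : ℝ) else 0)]
    simp [numDecEdges]
  simp only [h1]
  rw [h2, Finset.sum_comm, Finset.sum_comm (s := univ) (t := univ)
    (f := fun (x : Fin n → Bool) i => if x i = false ∧ decEdge f x i then (1 : ℝ) else 0),
    Finset.mul_sum]
  refine Finset.sum_congr rfl fun i _ => ?_
  rw [two_mul]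
  nth_rewrite 2 [← sum_flip i]
  rw [← Finset.sum_add_distrib]
  refine Finset.sum_congr rfl fun x _ => ?_
  simp only [decEdge_flip]
  cases e : x i <;> by_cases h : decEdge f x i <;> simp [flipC, e, h]

lemma cauchy_R (f : (Fin n → Bool) → Bool) :
    (∑ x, √((Rset f x).card : ℝ)) ^ 2 ≤
      (∑ x, ((Rset f x).card : ℝ) / Iminus f x) * (2 * (numDecEdges f : ℝ)) := by
  have h := Finset.sum_mul_sq_le_sq_mul_sq univ
    (fun x => √(((Rset f x).card : ℝ) / Iminus f x)) (fun x => √(Iminus f x : ℝ))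
  have e : ∀ x, √(((Rset f x).card : ℝ) / Iminus f x) * √(Iminus f x : ℝ) =
      √((Rset f x).card : ℝ) := by
    intro x
    rw [← Real.sqrt_mul (by positivity)]
    congr 1
    by_cases h0 : Iminus f x = 0
    · have := Rset_card_le f x
      rw [h0] at this
      simp [h0, Nat.le_zero.1 this]
    · have : (Iminus f x : ℝ) ≠ 0 := by exact_mod_cast h0
      field_simp
  simp only [e] at h
  rw [← sum_Iminus]
  refine h.trans (le_of_eq ?_)
  congr 1
  · exact Finset.sum_congr rfl fun x _ => Real.sq_sqrt (by positivity)
  · exact Finset.sum_congr rfl fun x _ => Real.sq_sqrt (by positivity)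

/-- Probability of hitting `i` and avoiding `T`. -/
lemma prob_hit_avoid (p : ℝ) (i : Fin n) (T : Finset (Fin n)) (hi : i ∉ T) :
    p * (1 - p) ^ T.card ≤ ∑ S : Finset (Fin n), p ^ S.card * (1 - p) ^ (n - S.card) *
      (if i ∈ S ∧ Disjoint S T then 1 else 0) := by
  have h := Finset.prod_add (fun k : Fin n => if k ∈ T then 0 else p)
    (fun k => if k = i then 0 else 1 - p) univ
  have e : ∏ k : Fin n, ((if k ∈ T then 0 else p) + (if k = i then 0 else 1 - p)) =
      p * (1 - p) ^ T.card := by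
    have : ∀ k : Fin n, ((if k ∈ T then 0 else p) + (if k = i then 0 else 1 - p)) =
        (if k = i then p else 1) * (if k ∈ T then 1 - p else 1) := by
      intro k
      by_cases hk : k = i
      · subst hk; simp [hi]
      · by_cases hT : k ∈ T <;> simp [hk, hT]
    simp only [this]
    rw [Finset.prod_mul_distrib, Finset.prod_ite_eq', Finset.prod_ite_mem]
    simp
  rw [e] at h
  rw [h, Finset.powerset_univ]
  apply le_of_eq
  refine Finset.sum_congr rfl fun S _ => ?_
  by_cases hS : i ∈ S ∧ Disjoint S T
  · rw [if_pos hS, mul_one]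
    congr 1
    · rw [← Finset.prod_const]
      refine Finset.prod_congr rfl fun k hk => ?_
      rw [if_neg (Finset.disjoint_left.1 hS.2 hk)]
    · have : n - S.card = (univ \ S).card := by
        rw [← Finset.compl_eq_univ_sdiff, Finset.card_compl, Fintype.card_fin]
      rw [this, ← Finset.prod_const]
      refine Finset.prod_congr rfl fun k hk => ?_
      have : k ≠ i := by
        rintro rfl
        exact (Finset.mem_sdiff.1 hk).2 hS.1
      rw [if_neg this]
  · rw [if_neg hS, mul_zero]
    rw [not_and_or, Finset.not_disjoint_iff] at hS
    rcases hS with hS | ⟨k, hk, hkT⟩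
    · apply mul_eq_zero_of_right
      exact Finset.prod_eq_zero (i := i) (by simp [hS]) (by simp)
    · apply mul_eq_zero_of_left
      exact Finset.prod_eq_zero hk (by simp [hkT])

/-- Probability that `x` is captured. -/
noncomputable def capP (f : (Fin n → Bool) → Bool) (h : ℕ) (x : Fin n → Bool) : ℝ :=
  ∑ S : Finset (Fin n), (1 / (2 ^ h : ℝ)) ^ S.card * (1 - 1 / (2 ^ h : ℝ)) ^ (n - S.card) *
    (if Capture f S x then 1 else 0)

lemma one_sub_nonneg (h : ℕ) : (0 : ℝ) ≤ 1 - 1 / (2 ^ h : ℝ) := by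
  have : (1 : ℝ) ≤ 2 ^ h := one_le_pow₀ (by norm_num)
  have : 1 / (2 ^ h : ℝ) ≤ 1 := by rw [div_le_one (by positivity)]; exact this
  linarith

lemma capP_nonneg (f : (Fin n → Bool) → Bool) (h : ℕ) (x : Fin n → Bool) : 0 ≤ capP f h x := by
  refine Finset.sum_nonneg fun S _ => ?_
  have := one_sub_nonneg h
  split_ifs <;> positivity

lemma exp_bound (d : ℕ) (hd : 1 ≤ d) :
    Real.exp (-4) ≤ (1 - 1 / (d : ℝ)) ^ (4 * (d - 1)) := by
  obtain ⟨e, rfl⟩ : ∃ e, d = e + 1 := ⟨d - 1, by omega⟩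
  rcases Nat.eq_zero_or_pos e with rfl | he
  · simp
  · have he' : (0 : ℝ) < e := by exact_mod_cast he
    have h1 : (1 : ℝ) - 1 / ((e + 1 : ℕ) : ℝ) = (1 + 1 / (e : ℝ))⁻¹ := by
      push_cast; field_simp; ring
    have h2 : 1 + 1 / (e : ℝ) ≤ Real.exp (1 / e) := by
      have := Real.add_one_le_exp (1 / (e : ℝ)); linarith
    have h3 : Real.exp (-(1 / e)) ≤ (1 + 1 / (e : ℝ))⁻¹ := by
      rw [Real.exp_neg]
      exact inv_anti₀ (by positivity) h2
    rw [h1, Nat.add_sub_cancel]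
    calc Real.exp (-4) = Real.exp (-(1 / (e : ℝ))) ^ (4 * e) := by
          rw [← Real.exp_nat_mul]; congr 1; push_cast; field_simp
      _ ≤ _ := by gcongr

lemma capP_ge (f : (Fin n → Bool) → Bool) (x : Fin n → Bool) (hx : 0 < Iminus f x) :
    ((Rset f x).card : ℝ) / Iminus f x ≤ Real.exp 4 * capP f (Nat.log 2 (Iminus f x)) x := by
  set h := Nat.log 2 (Iminus f x) with hh
  have hd1 : 2 ^ h ≤ Iminus f x := Nat.pow_log_le_self 2 hx.ne'
  have hd2 : Iminus f x < 2 ^ (h + 1) := Nat.lt_pow_succ_log_self (by norm_num) _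
  have hp := one_sub_nonneg h
  have hp0 : (0 : ℝ) ≤ 1 / 2 ^ h := by positivity
  have hp1 : 1 - 1 / (2 ^ h : ℝ) ≤ 1 := by linarith
  let Dec : Fin n → Finset (Fin n) := fun i => univ.filter fun j => decEdge f (flipC x i) j
  let T : Fin n → Finset (Fin n) := fun i => (Rset f x).erase i ∪ (Dec i).erase i
  have key : ∑ i ∈ Rset f x, (1 / (2 ^ h : ℝ)) * Real.exp (-4) ≤ capP f h x := by
    have s1 : ∀ i ∈ Rset f x, (1 / (2 ^ h : ℝ)) * Real.exp (-4) ≤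
        ∑ S : Finset (Fin n), (1 / (2 ^ h : ℝ)) ^ S.card * (1 - 1 / (2 ^ h : ℝ)) ^ (n - S.card) *
          (if i ∈ S ∧ Disjoint S (T i) then 1 else 0) := by
      intro i hi
      refine le_trans ?_ (prob_hit_avoid (1 / (2 ^ h : ℝ)) i (T i) (by simp [T]))
      have hi' := (Finset.mem_filter.1 hi).2
      have c1 : (T i).card ≤ 4 * (2 ^ h - 1) := by
        have a1 : ((Rset f x).erase i).card = (Rset f x).card - 1 := Finset.card_erase_of_mem hi
        have a2 : ((Dec i).erase i).card = (Dec i).card - 1 :=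
          Finset.card_erase_of_mem (by simp [Dec, decEdge_flip, hi'.1])
        have a3 := Rset_card_le f x
        have a4 : (Dec i).card ≤ Iminus f x := hi'.2
        have a5 := Finset.card_union_le ((Rset f x).erase i) ((Dec i).erase i)
        have a6 : (T i).card = ((Rset f x).erase i ∪ (Dec i).erase i).card := rfl
        have a7 : 2 ^ (h + 1) = 2 * 2 ^ h := by ring
        omega
      have c2 := exp_bound (2 ^ h) Nat.one_le_two_pow
      push_cast at c2
      have c3 := pow_le_pow_of_le_one hp hp1 c1
      exact mul_le_mul_of_nonneg_left (c2.trans c3) hp0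
    refine (Finset.sum_le_sum s1).trans ?_
    rw [Finset.sum_comm]
    unfold capP
    refine Finset.sum_le_sum fun S _ => ?_
    rw [← Finset.mul_sum]
    apply mul_le_mul_of_nonneg_left _ (by positivity)
    rw [← Finset.sum_filter, Finset.sum_const, nsmul_eq_mul, mul_one]
    have card1 : ((Rset f x).filter fun i => i ∈ S ∧ Disjoint S (T i)).card ≤ 1 := by
      rw [Finset.card_le_one]
      intro a ha b hb
      rw [Finset.mem_filter] at ha hb
      by_contra hab
      refine Finset.disjoint_left.1 ha.2.2 hb.2.1 ?_
      exact Finset.mem_union_left _ (Finset.mem_erase.2 ⟨fun e => hab e.symm, hb.1⟩)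
    by_cases hc : Capture f S x
    · rw [if_pos hc]; exact_mod_cast card1
    · rw [if_neg hc]
      have : ((Rset f x).filter fun i => i ∈ S ∧ Disjoint S (T i)) = ∅ := by
        rw [Finset.filter_eq_empty_iff]
        rintro i hi ⟨hiS, hdis⟩
        refine hc ⟨i, hiS, (Finset.mem_filter.1 hi).2.1, fun j hj hdec => ?_⟩
        rw [Finset.mem_sdiff, Finset.mem_singleton] at hj
        refine Finset.disjoint_left.1 hdis hj.1 ?_
        exact Finset.mem_union_right _ (Finset.mem_erase.2 ⟨hj.2, by simp [Dec, hdec]⟩)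
      rw [this]; simp
  rw [Finset.sum_const, nsmul_eq_mul] at key
  have hD : (2 ^ h : ℝ) ≤ Iminus f x := by exact_mod_cast hd1
  calc ((Rset f x).card : ℝ) / Iminus f x ≤ (Rset f x).card / 2 ^ h := by gcongr
    _ = Real.exp 4 * ((Rset f x).card * (1 / 2 ^ h * Real.exp (-4))) := by
        rw [Real.exp_neg]
        field_simp
    _ ≤ _ := by gcongr

lemma sum_capP (f : (Fin n → Bool) → Bool) (h : ℕ) :
    ∑ S : Finset (Fin n),
          (1 / (2 ^ h : ℝ)) ^ S.card * (1 - 1 / (2 ^ h : ℝ)) ^ (n - S.card) *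
            (((univ.filter fun x => Capture f S x).card : ℝ) / 2 ^ n) =
    (∑ x, capP f h x) / 2 ^ n := by
  unfold capP
  rw [Finset.sum_comm, Finset.sum_div]
  refine Finset.sum_congr rfl fun S _ => ?_
  rw [← Finset.mul_sum, mul_div_assoc]
  congr 2
  simp

lemma exists_scale (f : (Fin n → Bool) → Bool) :
    ∃ h, h ≤ Nat.log 2 n ∧ ∑ x, ((Rset f x).card : ℝ) / Iminus f x ≤
      (Nat.log 2 n + 1) * (Real.exp 4 * ∑ x, capP f h x) := by
  have h1 : ∑ x, ((Rset f x).card : ℝ) / Iminus f x ≤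
      ∑ h ∈ Finset.range (Nat.log 2 n + 1), Real.exp 4 * ∑ x, capP f h x := by
    rw [← Finset.mul_sum, Finset.sum_comm, Finset.mul_sum]
    refine Finset.sum_le_sum fun x _ => ?_
    rcases Nat.eq_zero_or_pos (Iminus f x) with h0 | h0
    · rw [h0]
      simp only [Nat.cast_zero, div_zero]
      exact mul_nonneg (Real.exp_pos _).le (Finset.sum_nonneg fun _ _ => capP_nonneg _ _ _)
    · refine (capP_ge f x h0).trans ?_
      gcongr
      have hle : Iminus f x ≤ n := by
        have := Finset.card_le_univ (univ.filter fun i => decEdge f x i)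
        rwa [Fintype.card_fin] at this
      exact Finset.single_le_sum (f := fun h => capP f h x) (fun h _ => capP_nonneg f h x)
        (Finset.mem_range.2 (Nat.lt_succ_of_le (Nat.log_mono_right hle)))
  by_contra hcon
  push Not at hcon
  have h2 : ∑ h ∈ Finset.range (Nat.log 2 n + 1), Real.exp 4 * ∑ x, capP f h x <
      ∑ h ∈ Finset.range (Nat.log 2 n + 1),
        (∑ x, ((Rset f x).card : ℝ) / Iminus f x) / (Nat.log 2 n + 1) := by
    apply Finset.sum_lt_sum_of_nonempty ⟨0, by simp⟩
    intro h hh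
    have := hcon h (by rw [Finset.mem_range] at hh; omega)
    rw [lt_div_iff₀ (by positivity)]
    linarith
  rw [Finset.sum_const, Finset.card_range, nsmul_eq_mul] at h2
  push_cast at h2
  rw [mul_div_cancel₀ _ (by positivity)] at h2
  linarith

/-- if `dist(f, Mono) ≥ ε` and `f` has fewer than `ε·√n·2^n`
decreasing edges, then for some `d = 2^h` with `h ≤ ⌊log₂ n⌋`,
`E_{S ~ S(1/d)}[Pr_x[Capture(x,S,f)=1]] ≥ c·ε/(√n·(log₂ n)^4)`. -/
theorem stmt4 : ∃ c : ℝ, 0 < c ∧ ∀ n : ℕ, 2 ≤ n → ∀ ε : ℝ, 0 < ε →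
    ∀ f : (Fin n → Bool) → Bool, ε ≤ distMono f →
    (numDecEdges f : ℝ) < ε * Real.sqrt n * 2 ^ n →
    ∃ h : ℕ, h ≤ Nat.log 2 n ∧
      c * ε / (Real.sqrt n * (Real.logb 2 n) ^ 4) ≤
        ∑ S : Finset (Fin n),
          (1 / (2 ^ h : ℝ)) ^ S.card * (1 - 1 / (2 ^ h : ℝ)) ^ (n - S.card) *
            (((univ.filter fun x => Capture f S x).card : ℝ) / 2 ^ n) := by
  refine ⟨1 / (9216 * Real.exp 4), by positivity, ?_⟩
  intro n hn ε hε f hf hE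
  obtain ⟨h, hh, hs⟩ := exists_scale f
  refine ⟨h, hh, ?_⟩
  rw [sum_capP]
  have hl1 : 1 ≤ Nat.log 2 n := by
    exact Nat.log_pos (by norm_num) hn
  have hk : 2 * n ≤ 2 ^ (Nat.log 2 n + 2) := by
    have := Nat.lt_pow_succ_log_self (b := 2) (by norm_num) n
    have e : 2 ^ (Nat.log 2 n + 2) = 2 * 2 ^ (Nat.log 2 n + 1) := by ring
    rw [e]
    have : n ≤ 2 ^ (Nat.log 2 n + 1) := this.le
    omega
  have rd := robust_directed f (Mfun f) (iMono_Mfun f) (Nat.log 2 n + 2) hk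
  have hP := Phi_le f
  have hC := cauchy_R f
  have hlog : (Nat.log 2 n : ℝ) ≤ Real.logb 2 n := by
    have := Real.natLog_le_logb n 2
    exact_mod_cast this
  have hl1' : (1 : ℝ) ≤ Nat.log 2 n := by exact_mod_cast hl1
  have hn0 : (0 : ℝ) < √(n : ℝ) := Real.sqrt_pos.2 (by exact_mod_cast (by omega : 0 < n))
  have hN : (0 : ℝ) < 2 ^ n := by positivity
  have hW0 : 0 ≤ ∑ x, ((Rset f x).card : ℝ) / Iminus f x :=
    Finset.sum_nonneg fun _ _ => by positivity
  have hQ0 : 0 ≤ ∑ x, capP f h x := Finset.sum_nonneg fun _ _ => capP_nonneg _ _ _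
  have hR0 : 0 ≤ ∑ x, √((Rset f x).card : ℝ) := Finset.sum_nonneg fun _ _ => Real.sqrt_nonneg _
  push_cast at rd
  generalize (∑ x, ((Rset f x).card : ℝ) / Iminus f x) = W at *
  generalize (∑ x, capP f h x) = Q at *
  generalize (∑ x, √((Rset f x).card : ℝ)) = R at *
  generalize (∑ x, √(∑ i, wB (f x) (Mfun f i x))) = Φ at *
  generalize (Nat.log 2 n : ℝ) = l at *
  generalize Real.logb 2 (n : ℝ) = t at *
  generalize √(n : ℝ) = s at *
  generalize (2 : ℝ) ^ n = N at *
  generalize (numDecEdges f : ℝ) = E at *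
  have ht : 1 ≤ t := hl1'.trans hlog
  have hX : 0 < Real.exp 4 := Real.exp_pos _
  generalize Real.exp 4 = X at *
  -- lower bound on `R`
  have r1 : ε * N ≤ 48 * t * R := by
    calc ε * N ≤ distMono f * N := by gcongr
      _ ≤ 16 * (l + 2) * Φ := rd
      _ ≤ 16 * (l + 2) * R := by gcongr
      _ ≤ 48 * t * R := by
        apply mul_le_mul_of_nonneg_right _ hR0
        linarith
  have r2 : (ε * N) ^ 2 ≤ (48 * t) ^ 2 * (W * (2 * (ε * s * N))) := by
    calc (ε * N) ^ 2 ≤ (48 * t * R) ^ 2 := by gcongr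
      _ = (48 * t) ^ 2 * R ^ 2 := by ring
      _ ≤ (48 * t) ^ 2 * (W * (2 * E)) := by gcongr
      _ ≤ _ := by gcongr
  have r3 : ε * N ≤ 4608 * t ^ 2 * W * s := by
    have hpos : 0 < ε * N := by positivity
    have : (ε * N) * (ε * N) ≤ (4608 * t ^ 2 * W * s) * (ε * N) := by nlinarith
    exact le_of_mul_le_mul_right this hpos
  have r4 : W ≤ 2 * t * (X * Q) := by
    refine hs.trans ?_
    apply mul_le_mul_of_nonneg_right _ (by positivity)
    linarith
  have r5 : ε * N ≤ 9216 * X * t ^ 3 * s * Q := by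
    calc ε * N ≤ 4608 * t ^ 2 * W * s := r3
      _ ≤ 4608 * t ^ 2 * (2 * t * (X * Q)) * s := by gcongr
      _ = _ := by ring
  have r6 : ε * N ≤ 9216 * X * t ^ 4 * s * Q := by
    refine r5.trans ?_
    have : t ^ 3 ≤ t ^ 4 := pow_le_pow_right₀ ht (by norm_num)
    gcongr
  rw [div_le_div_iff₀ (by positivity) hN]
  rw [div_mul_eq_mul_div, one_mul, div_mul_eq_mul_div, div_le_iff₀ (by positivity)]
  linarith
end

section
/- There is a universal constant c > 0 such that for every n ≥ 1, every ε > 0, every f : {0,1}^n → {0,1} that is ε-far from monotone, and every coloring col : S_f⁻ → {red, blue} of the decreasing edges of f, (1/2^n)·Σ_{x ∈ {0,1}^n} √(I⁻_{f,red}(x)) + (1/2^n)·Σ_{y ∈ {0,1}^n} √(I⁻_{f,blue}(y)) ≥ c·ε. -/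
open Finset

attribute [local instance] Classical.propDecidable

variable {n : ℕ}

/-- Finite Minkowski inequality in the plane. -/
lemma mink {ι : Type*} (s : Finset ι) (u d : ι → ℝ) :
    Real.sqrt ((∑ i ∈ s, u i) ^ 2 + (∑ i ∈ s, d i) ^ 2) ≤ ∑ i ∈ s, Real.sqrt (u i ^ 2 + d i ^ 2) := by
  have h := norm_sum_le s (fun i => (⟨u i, d i⟩ : ℂ))
  have e : (∑ i ∈ s, (⟨u i, d i⟩ : ℂ)) = ⟨∑ i ∈ s, u i, ∑ i ∈ s, d i⟩ := by
    apply Complex.ext <;> simp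
  rw [e] at h
  simpa [Complex.norm_def, Complex.normSq_mk, ← sq] using h

lemma scal (p d u : Fin 16 → ℝ) (hd : ∀ v, 0 ≤ d v)
    (hp0 : ∀ v, 0 ≤ p v) (hp1 : ∀ v, p v ≤ 1)
    (h : ∀ v w, |p v - p w| ≤ d v + d w) (hu : ∀ v, p v * (1 - p v) ≤ 16 * u v) :
    ((∑ v, p v) / 16) * (1 - (∑ v, p v) / 16) ≤ ∑ v, Real.sqrt (u v ^ 2 + d v ^ 2) := by
  refine le_trans ?_ (mink univ u d)
  apply Real.le_sqrt_of_sq_le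
  set P := ∑ v, p v with hP
  set Q := ∑ v, p v ^ 2 with hQ
  set U := ∑ v, u v with hU
  set D := ∑ v, d v with hD
  have h1 : P - Q ≤ 16 * U := by
    rw [hP, hQ, hU, mul_sum, ← sum_sub_distrib]
    exact sum_le_sum fun v _ => by nlinarith [hu v]
  have h2 : 0 ≤ P - Q := by
    rw [hP, hQ, ← sum_sub_distrib]
    exact sum_nonneg fun v _ => by nlinarith [hp0 v, hp1 v]
  have h3 : ∑ v, ∑ w, (p v - p w) ^ 2 = 32 * Q - 2 * P ^ 2 := by
    have : ∀ v w, (p v - p w) ^ 2 = p v ^ 2 + p w ^ 2 - 2 * (p v * p w) := fun v w => by ring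
    simp only [this, sum_sub_distrib, sum_add_distrib, ← mul_sum, ← sum_mul, sum_const]
    rw [← hQ, ← hP]
    simp only [card_univ, Fintype.card_fin, nsmul_eq_mul, ← mul_sum, ← hQ]
    push_cast
    ring
  have h4 : ∑ v, ∑ w, (p v - p w) ^ 2 ≤ (32 * D) ^ 2 := by
    rw [← Fintype.sum_prod_type' (f := fun v w => (p v - p w) ^ 2)]
    calc ∑ x : Fin 16 × Fin 16, (p x.1 - p x.2) ^ 2 
        ≤ ∑ x : Fin 16 × Fin 16, (d x.1 + d x.2) ^ 2 := by
          apply sum_le_sum; intro x _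
          rw [← sq_abs]
          exact pow_le_pow_left₀ (abs_nonneg _) (h _ _) 2
      _ ≤ (∑ x : Fin 16 × Fin 16, (d x.1 + d x.2)) ^ 2 := by
          apply sum_sq_le_sq_sum_of_nonneg
          intro x _; exact add_nonneg (hd _) (hd _)
      _ = (32 * D) ^ 2 := by
          rw [Fintype.sum_prod_type]
          simp only [sum_add_distrib, sum_const]
          simp [← hD, ← mul_sum]
          ring
  have h5 : 0 ≤ ∑ v, ∑ w, (p v - p w) ^ 2 := by positivity
  rw [h3] at h4 h5
  have hj : ((P - Q) / 16) ^ 2 ≤ U ^ 2 := by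
    apply pow_le_pow_left₀ (by linarith); linarith
  have hV0 : 0 ≤ Q / 16 - (P / 16) ^ 2 := by nlinarith
  have hV : Q / 16 - (P / 16) ^ 2 ≤ 2 * D ^ 2 := by nlinarith
  have hJ : P / 16 * (1 - P / 16) ≤ 1 / 4 := by nlinarith [sq_nonneg (P / 16 - 1 / 2)]
  have hJ' : P / 16 * (1 - P / 16) = (P - Q) / 16 + (Q / 16 - (P / 16) ^ 2) := by ring
  rw [hJ'] at hJ ⊢
  generalize (P - Q) / 16 = j at *
  generalize (Q / 16 - (P / 16) ^ 2) = V at *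
  nlinarith

lemma sqrt_div_aux (U D N : ℝ) (hN : 0 < N) :
    Real.sqrt ((U / N) ^ 2 + (D / N) ^ 2) = Real.sqrt (U ^ 2 + D ^ 2) / N := by
  rw [div_pow, div_pow, ← add_div, Real.sqrt_div (by positivity), Real.sqrt_sq hN.le]

lemma mul_div_aux (a N : ℝ) : a / N = 16 * (a / (N * 16)) := by
  rw [← div_div]; ring

lemma sum_finCons {m : ℕ} (F : (Fin (m + 1) → Fin 16) → ℝ) :
    ∑ c, F c = ∑ v : Fin 16, ∑ c : Fin m → Fin 16, F (Fin.cons v c) := by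
  rw [← (Fin.consEquiv (fun _ : Fin (m + 1) => Fin 16)).sum_comp, Fintype.sum_prod_type]
  rfl

/-- Robust undirected Talagrand inequality on `[16]^m`. -/
lemma tal_s6 (m : ℕ) (h : (Fin m → Fin 16) → Bool) (R : (Fin m → Fin 16) → Finset (Fin m))
    (cover : ∀ c j v, h c ≠ h (Function.update c j v) →
      j ∈ R c ∨ j ∈ R (Function.update c j v)) :
    ((∑ c, if h c then (1 : ℝ) else 0) / 16 ^ m) *
      (1 - (∑ c, if h c then (1 : ℝ) else 0) / 16 ^ m)
      ≤ 16 * ((∑ c, Real.sqrt ((R c).card)) / 16 ^ m) := by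
  induction m with
  | zero =>
    have e : ∀ F : (Fin 0 → Fin 16) → ℝ, ∑ c, F c = F default := fun F => by
      rw [Fintype.sum_unique]; exact congrArg F (Subsingleton.elim _ _)
    rw [e, e]
    have := Real.sqrt_nonneg ((R default).card : ℝ)
    by_cases hh : h default = true <;> simp
  | succ m ih =>
    have hN : (0 : ℝ) < 16 ^ m := by positivity
    set p : Fin 16 → ℝ := fun v => (∑ c : Fin m → Fin 16, if h (Fin.cons v c) then (1 : ℝ) else 0) / 16 ^ m with hp
    set R' : Fin 16 → (Fin m → Fin 16) → Finset (Fin m) :=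
      fun v c => univ.filter fun j => j.succ ∈ R (Fin.cons v c) with hR'
    set δ : Fin 16 → (Fin m → Fin 16) → ℝ := fun v c => if (0 : Fin (m+1)) ∈ R (Fin.cons v c) then 1 else 0 with hδ
    set u : Fin 16 → ℝ := fun v => (∑ c, Real.sqrt ((R' v c).card)) / 16 ^ m with hu
    set d : Fin 16 → ℝ := fun v => (∑ c, δ v c) / 16 ^ m with hd
    have key := scal p d u ?_ ?_ ?_ ?_ ?_
    · have e1 : (∑ c, if h c then (1 : ℝ) else 0) / 16 ^ (m + 1) = (∑ v, p v) / 16 := by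
        rw [sum_finCons, hp, ← sum_div, pow_succ, div_div]
      rw [e1]
      refine key.trans ?_
      rw [sum_finCons, pow_succ, sum_div, mul_sum]
      apply sum_le_sum
      intro v _
      have e2 : ∀ c, Real.sqrt ((R (Fin.cons v c)).card) =
          Real.sqrt ((Real.sqrt ((R' v c).card)) ^ 2 + (δ v c) ^ 2) := by
        intro c
        congr 1
        rw [Real.sq_sqrt (by positivity)]
        have : (R (Fin.cons v c)).card = (if (0 : Fin (m+1)) ∈ R (Fin.cons v c) then 1 else 0) + (R' v c).card := by
          have h1 := Fin.card_filter_univ_succ (fun j => j ∈ R (Fin.cons v c))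
          rw [filter_univ_mem] at h1
          rw [h1]
          split_ifs
          · exact add_comm _ _
          · exact (zero_add _).symm
        rw [this, hδ]
        push_cast
        split_ifs <;> simp [add_comm]
      simp only [e2]
      have := mink univ (fun c => Real.sqrt ((R' v c).card)) (δ v)
      have e3 : Real.sqrt (u v ^ 2 + d v ^ 2) = Real.sqrt ((∑ c, Real.sqrt ((R' v c).card)) ^ 2 + (∑ c, δ v c) ^ 2) / 16 ^ m := by
        exact sqrt_div_aux _ _ _ hN
      rw [e3]
      calc _ ≤ (∑ i, Real.sqrt (Real.sqrt ((R' v i).card) ^ 2 + δ v i ^ 2)) / 16 ^ m := by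
            gcongr
        _ = _ := mul_div_aux _ _
    · intro v; rw [hd]; simp only []
      apply div_nonneg _ hN.le
      apply sum_nonneg; intro c _; rw [hδ]; simp only []; split_ifs <;> norm_num
    · intro v; rw [hp]; simp only []
      apply div_nonneg _ hN.le
      apply sum_nonneg; intro c _; split_ifs <;> norm_num
    · intro v; rw [hp]; simp only []
      rw [div_le_one hN]
      calc _ ≤ ∑ c : Fin m → Fin 16, (1 : ℝ) := by
            apply sum_le_sum; intro c _; split_ifs <;> norm_num
        _ = _ := by simp
    · intro v w
      rw [hp, hd]; simp only []
      rw [← sub_div, ← add_div, abs_div, abs_of_pos hN]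
      gcongr
      rw [← sum_sub_distrib, ← sum_add_distrib]
      refine (abs_sum_le_sum_abs _ _).trans ?_
      apply sum_le_sum; intro c _
      have hc := cover (Fin.cons v c) 0 w
      rw [Fin.update_cons_zero] at hc
      rw [hδ]; simp only []
      by_cases hh : h (Fin.cons v c) = h (Fin.cons w c)
      · rw [hh, sub_self, abs_zero]; split_ifs <;> norm_num
      · rcases hc hh with h0 | h0 <;> simp only [h0, if_true] <;> split_ifs <;> norm_num
    · intro v
      refine ih (fun c => h (Fin.cons v c)) (R' v) ?_
      intro c j w hne
      have := cover (Fin.cons v c) j.succ w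
      rw [← Fin.cons_update] at this
      simpa [hR'] using this hne

lemma pair_le (i : Fin n) (φ ψ : (Fin n → Bool) → ℝ)
    (h : ∀ x, φ (Function.update x i false) + φ (Function.update x i true) ≤
      ψ (Function.update x i false) + ψ (Function.update x i true)) :
    ∑ x, φ x ≤ ∑ x, ψ x := by
  have key : ∀ φ : (Fin n → Bool) → ℝ, 2 * ∑ x, φ x =
      ∑ x, (φ (Function.update x i false) + φ (Function.update x i true)) := by
    intro φ
    have hinv : Function.Involutive (fun x : Fin n → Bool => flipC x i) := by
      intro x; simp [flipC]
    have e : ∑ x, φ (flipC x i) = ∑ x, φ x := Equiv.sum_comp hinv.toPerm φ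
    rw [two_mul]
    nth_rewrite 2 [← e]
    rw [← sum_add_distrib]
    apply sum_congr rfl
    intro x _
    have hx : Function.update x i (x i) = x := Function.update_eq_self i x
    unfold flipC
    cases hb : x i
    · rw [hb] at hx; rw [hx]; rfl
    · rw [hb] at hx; rw [hx, add_comm]; rfl
  have := sum_le_sum (s := univ) fun x _ => h x
  rw [← key, ← key] at this
  linarith

/-- Sorting along dimension `i`. -/
def srt (i : Fin n) (f : (Fin n → Bool) → Bool) (x : Fin n → Bool) : Bool :=
  if x i then f (Function.update x i false) || f (Function.update x i true)
  else f (Function.update x i false) && f (Function.update x i true)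

def srtL : List (Fin n) → ((Fin n → Bool) → Bool) → ((Fin n → Bool) → Bool)
  | [], f => f
  | i :: l, f => srt i (srtL l f)

def monoAt (f : (Fin n → Bool) → Bool) (i : Fin n) : Prop :=
  ∀ x, f (Function.update x i false) = true → f (Function.update x i true) = true

noncomputable def ham (f g : (Fin n → Bool) → Bool) : ℝ := ∑ x, if f x = g x then 0 else 1

lemma ham_self (f : (Fin n → Bool) → Bool) : ham f f = 0 := by simp [ham]

lemma ham_comm (f g : (Fin n → Bool) → Bool) : ham f g = ham g f := by simp [ham, eq_comm]

lemma ham_nonneg (f g : (Fin n → Bool) → Bool) : 0 ≤ ham f g := by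
  apply sum_nonneg; intro x _; split_ifs <;> norm_num

lemma ham_tri (f g h : (Fin n → Bool) → Bool) : ham f h ≤ ham f g + ham g h := by
  unfold ham
  rw [← sum_add_distrib]
  apply sum_le_sum
  intro x _
  cases f x <;> cases g x <;> cases h x <;> norm_num

lemma monoAt_srt (i : Fin n) (f : (Fin n → Bool) → Bool) : monoAt (srt i f) i := by
  intro x
  simp [srt]
  tauto

lemma monoAt_srt_of (i j : Fin n) (f : (Fin n → Bool) → Bool) (h : monoAt f j) :
    monoAt (srt i f) j := by
  by_cases hij : i = j
  · subst hij; exact monoAt_srt i f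
  intro x
  have e : ∀ b c, Function.update (Function.update x j b) i c =
    Function.update (Function.update x i c) j b := fun b c => 
      Function.update_comm (Ne.symm hij) _ _ _
  have h0 := h (Function.update x i false)
  have h1 := h (Function.update x i true)
  simp only [srt, e, Function.update_of_ne hij]
  split_ifs <;> simp <;> tauto

lemma srt_of_monoAt (i : Fin n) (f : (Fin n → Bool) → Bool) (h : monoAt f i) : srt i f = f := by
  funext x
  have hx : Function.update x i (x i) = x := Function.update_eq_self i x
  have := h x
  unfold srt
  cases hb : x i <;> rw [hb] at hx <;> rw [hx] at this ⊢ <;> simp <;> tauto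

lemma ham_srt (i : Fin n) (f g : (Fin n → Bool) → Bool) : ham (srt i f) (srt i g) ≤ ham f g := by
  apply pair_le i
  intro x
  simp only [srt, Function.update_self, Function.update_idem]
  cases f (Function.update x i false) <;> cases f (Function.update x i true) <;>
  cases g (Function.update x i false) <;> cases g (Function.update x i true) <;> norm_num

lemma ham_srtL (l : List (Fin n)) (f g : (Fin n → Bool) → Bool) :
    ham (srtL l f) (srtL l g) ≤ ham f g := by
  induction l with
  | nil => exact le_rfl
  | cons i l ih => exact (ham_srt i _ _).trans ih

lemma monoAt_srtL_of (l : List (Fin n)) (f : (Fin n → Bool) → Bool) (j : Fin n)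
    (h : j ∈ l ∨ monoAt f j) : monoAt (srtL l f) j := by
  induction l with
  | nil => simpa [srtL] using h
  | cons i l ih =>
    by_cases hij : j = i
    · subst hij; exact monoAt_srt _ _
    · apply monoAt_srt_of
      apply ih
      simpa [hij] using h

lemma srtL_of_monoAt (l : List (Fin n)) (f : (Fin n → Bool) → Bool) 
    (h : ∀ j ∈ l, monoAt f j) : srtL l f = f := by
  induction l with
  | nil => rfl
  | cons i l ih =>
    simp only [List.mem_cons, forall_eq_or_imp] at h
    rw [srtL, ih h.2, srt_of_monoAt i f h.1]

lemma monoB_of (f : (Fin n → Bool) → Bool) (h : ∀ j, monoAt f j) : monoB f := by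
  have key : ∀ T : Finset (Fin n), ∀ x y : Fin n → Bool, (∀ i, x i ≤ y i) →
      f x ≤ f (fun i => if i ∈ T then y i else x i) := by
    intro T x y hxy
    induction T using Finset.induction_on with
    | empty => simp
    | insert a T ha ih =>
      refine ih.trans ?_
      set z : Fin n → Bool := fun i => if i ∈ T then y i else x i with hz
      have e1 : z = Function.update z a (x a) := by
        conv_lhs => rw [← Function.update_eq_self a z]
        simp [hz, ha]
      have e2 : (fun i => if i ∈ insert a T then y i else x i) = Function.update z a (y a) := by
        funext i
        by_cases hi : i = a
        · subst hi; simp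
        · simp [hi, hz]
      rw [e2, e1, Function.update_idem]
      have hh := h a z
      have hxa := hxy a
      revert hh hxa
      cases x a <;> cases y a <;> 
      cases f (Function.update z a false) <;> cases f (Function.update z a true) <;> simp
  intro x y hxy
  simpa using key univ x y hxy

/-- Split operator: the coordinate `i` of `y` gets split into `x i` (plus part) and `y i`. -/
def splitG (i : Fin n) (G : (Fin n → Bool) → (Fin n → Bool) → Bool)
    (x y : Fin n → Bool) : Bool :=
  if x i then G x (Function.update y i true) || G x y
  else G x (Function.update y i false) && G x y

def splitR (i : Fin n) (G : (Fin n → Bool) → (Fin n → Bool) → Bool)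
    (R : (Fin n → Bool) → (Fin n → Bool) → Finset (Fin n))
    (x y : Fin n → Bool) : Finset (Fin n) :=
  if x i = y i then R x y
  else if G x (Function.update y i false) = G x (Function.update y i true) then
    (if G x (Function.update y i false) = x i then
      R x (Function.update y i false) ∩ R x (Function.update y i true)
    else R x (Function.update y i false) ∪ R x (Function.update y i true))
  else if G x (Function.update y i false) = x i then R x (Function.update y i false)
  else R x (Function.update y i true)

structure Good (S : Finset (Fin n)) (l : List (Fin n))
    (G : (Fin n → Bool) → (Fin n → Bool) → Bool)
    (R : (Fin n → Bool) → (Fin n → Bool) → Finset (Fin n)) : Prop where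
  indG : ∀ j ∉ l, ∀ x y b, G (Function.update x j b) y = G x y
  indR : ∀ j ∉ l, ∀ x y b, R (Function.update x j b) y = R x y
  anti : ∀ j ∈ l, ∀ x y, G x (Function.update y j true) = true →
    G x (Function.update y j false) = true
  cover : ∀ j ∈ S, ∀ x y, G x (Function.update y j false) = true →
    G x (Function.update y j true) = false →
    j ∈ R x (Function.update y j false) ∨ j ∈ R x (Function.update y j true)

lemma Good.step {S : Finset (Fin n)} {l : List (Fin n)}
    {G : (Fin n → Bool) → (Fin n → Bool) → Bool}
    {R : (Fin n → Bool) → (Fin n → Bool) → Finset (Fin n)} (hg : Good S l G R)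
    (i : Fin n) (hi : i ∉ l) : Good S (i :: l) (splitG i G) (splitR i G R) where
  indG := by
    intro j hj x y b
    simp only [List.mem_cons, not_or] at hj
    simp [splitG, hg.indG j hj.2, Function.update_of_ne (Ne.symm hj.1)]
  indR := by
    intro j hj x y b
    simp only [List.mem_cons, not_or] at hj
    simp [splitR, hg.indG j hj.2, hg.indR j hj.2, Function.update_of_ne (Ne.symm hj.1)]
  anti := by
    intro j hj x y
    by_cases hij : j = i
    · subst hij
      simp only [splitG, Function.update_idem]
      cases x j <;> simp <;> tauto
    · have hj' : j ∈ l := by simpa [hij] using hj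
      have e : ∀ b c, Function.update (Function.update y j b) i c =
        Function.update (Function.update y i c) j b := fun b c => 
          Function.update_comm hij _ _ _
      have h0 := hg.anti j hj' x (Function.update y i false)
      have h1 := hg.anti j hj' x (Function.update y i true)
      have h2 := hg.anti j hj' x y
      simp only [splitG, e]
      cases x i <;> simp <;> tauto
  cover := by
    intro j hj x y
    by_cases hij : j = i
    · subst hij
      have h := hg.cover j hj x y
      simp only [splitG, splitR, Function.update_idem, Function.update_self]
      revert h
      cases x j <;> cases G x (Function.update y j false) <;>
        cases G x (Function.update y j true) <;> simp
    · have e : ∀ b c, Function.update (Function.update y i b) j c =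
        Function.update (Function.update y j c) i b := fun b c => 
          Function.update_comm (Ne.symm hij) _ _ _
      have h0 := hg.cover j hj x (Function.update y i false)
      have h1 := hg.cover j hj x (Function.update y i true)
      have hy : ∀ b, Function.update y j b = Function.update (Function.update y j b) i (y i) := by
        intro b
        conv_lhs => rw [← Function.update_eq_self i (Function.update y j b)]
        rw [Function.update_of_ne (Ne.symm hij)]
      simp only [e] at h0 h1
      simp only [splitG, splitR, Function.update_of_ne (Ne.symm hij)]
      rw [hy false, hy true]
      simp only [Function.update_idem]
      generalize Function.update (Function.update y j false) i = z0 at *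
      generalize Function.update (Function.update y j true) i = z1 at *
      revert h0 h1
      cases x i <;> cases y i <;> cases G x (z0 false) <;> cases G x (z0 true) <;>
        cases G x (z1 false) <;> cases G x (z1 true) <;> simp <;> tauto

lemma sqrt_inter_union (A B : Finset (Fin n)) :
    Real.sqrt ((A ∩ B).card) + Real.sqrt ((A ∪ B).card) ≤
      Real.sqrt (A.card) + Real.sqrt (B.card) := by
  have h1 : ((A ∩ B).card : ℝ) + (A ∪ B).card = A.card + B.card := by
    exact_mod_cast card_inter_add_card_union A B
  have h2 : ((A ∩ B).card : ℝ) ≤ A.card := by exact_mod_cast card_le_card inter_subset_left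
  have h3 : ((A ∩ B).card : ℝ) ≤ B.card := by exact_mod_cast card_le_card inter_subset_right
  have h0 : (0 : ℝ) ≤ (A ∩ B).card := by positivity
  have h4 : (0 : ℝ) ≤ (A ∪ B).card := by positivity
  generalize ((A ∩ B).card : ℝ) = s at *
  generalize ((A ∪ B).card : ℝ) = t at *
  generalize (A.card : ℝ) = a at *
  generalize (B.card : ℝ) = b at *
  have ha : 0 ≤ a := h0.trans h2
  have hb : 0 ≤ b := h0.trans h3
  have hprod : s * t ≤ a * b := by nlinarith
  have hs : Real.sqrt s * Real.sqrt t ≤ Real.sqrt a * Real.sqrt b := by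
    rw [← Real.sqrt_mul h0, ← Real.sqrt_mul ha]
    exact Real.sqrt_le_sqrt hprod
  refine (pow_le_pow_iff_left₀ (by positivity) (by positivity) two_ne_zero).1 ?_
  nlinarith [Real.sq_sqrt h0, Real.sq_sqrt h4, Real.sq_sqrt ha, Real.sq_sqrt hb]

/-- `x` shifted by `A`. -/
def shift (x A : Fin n → Bool) : Fin n → Bool := fun j => xor (x j) (A j)

lemma shift_update (x A : Fin n → Bool) (i : Fin n) (b : Bool) :
    shift (Function.update x i b) A = Function.update (shift x A) i (xor b (A i)) := by
  funext j
  by_cases h : j = i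
  · subst h; simp [shift]
  · simp [shift, h]

noncomputable def cost (R : (Fin n → Bool) → (Fin n → Bool) → Finset (Fin n))
    (A : Fin n → Bool) : ℝ := ∑ x, Real.sqrt ((R x (shift x A)).card)

lemma Good.cost_step {S : Finset (Fin n)} {l : List (Fin n)}
    {G : (Fin n → Bool) → (Fin n → Bool) → Bool}
    {R : (Fin n → Bool) → (Fin n → Bool) → Finset (Fin n)} (hg : Good S l G R)
    (i : Fin n) (hi : i ∉ l) (A : Fin n → Bool) : cost (splitR i G R) A ≤ cost R A := by
  apply pair_le i
  intro x
  simp only [shift_update, splitR, Function.update_self, Function.update_idem,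
    hg.indG i hi, hg.indR i hi]
  have := sqrt_inter_union (R x (Function.update (shift x A) i false))
    (R x (Function.update (shift x A) i true))
  cases A i <;> cases G x (Function.update (shift x A) i false) <;>
    cases G x (Function.update (shift x A) i true) <;> simp <;> linarith

def Gl (f : (Fin n → Bool) → Bool) : List (Fin n) → (Fin n → Bool) → (Fin n → Bool) → Bool
  | [] => fun _ y => f y
  | i :: l => splitG i (Gl f l)

def Rl (f : (Fin n → Bool) → Bool) (R : (Fin n → Bool) → Finset (Fin n)) :
    List (Fin n) → (Fin n → Bool) → (Fin n → Bool) → Finset (Fin n)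
  | [] => fun _ y => R y
  | i :: l => splitR i (Gl f l) (Rl f R l)

def Cov (S : Finset (Fin n)) (f : (Fin n → Bool) → Bool)
    (R : (Fin n → Bool) → Finset (Fin n)) : Prop :=
  ∀ j ∈ S, ∀ y, f (Function.update y j false) = true → f (Function.update y j true) = false →
    j ∈ R (Function.update y j false) ∨ j ∈ R (Function.update y j true)

lemma good_all {S : Finset (Fin n)} {f : (Fin n → Bool) → Bool}
    {R : (Fin n → Bool) → Finset (Fin n)} (hc : Cov S f R) (l : List (Fin n)) (hl : l.Nodup) :
    Good S l (Gl f l) (Rl f R l) := by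
  induction l with
  | nil =>
    exact ⟨fun _ _ _ _ _ => rfl, fun _ _ _ _ _ => rfl, fun j hj => by simp at hj,
      fun j hj _ y => hc j hj y⟩
  | cons i l ih =>
    rw [List.nodup_cons] at hl
    exact (ih hl.2).step i hl.1

lemma cost_all {S : Finset (Fin n)} {f : (Fin n → Bool) → Bool}
    {R : (Fin n → Bool) → Finset (Fin n)} (hc : Cov S f R) (l : List (Fin n)) (hl : l.Nodup)
    (A : Fin n → Bool) : cost (Rl f R l) A ≤ ∑ x, Real.sqrt ((R x).card) := by
  induction l with
  | nil =>
    have hinv : Function.Involutive (fun x : Fin n → Bool => shift x A) := by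
      intro x; funext j; simp [shift]
    exact (Equiv.sum_comp hinv.toPerm (fun x => Real.sqrt ((R x).card))).le
  | cons i l ih =>
    rw [List.nodup_cons] at hl
    exact ((good_all hc l hl.2).cost_step i hl.1 A).trans (ih hl.2)

lemma Gl_eq (f : (Fin n → Bool) → Bool) (l : List (Fin n)) (hl : l.Nodup) (x y : Fin n → Bool) :
    Gl f l x y = srtL (l.filter (fun j => x j != y j)) f (fun j => if j ∈ l then x j else y j) := by
  induction l generalizing y with
  | nil => simp [Gl, srtL]
  | cons i l ih =>
    rw [List.nodup_cons] at hl
    set F := srtL (l.filter (fun j => x j != y j)) f with hF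
    set w : Fin n → Bool := fun j => if j ∈ l then x j else y j with hw
    have hwi : w i = y i := by simp [hw, hl.1]
    have h1 : ∀ b, Gl f l x (Function.update y i b) = F (Function.update w i b) := by
      intro b
      rw [ih hl.2]
      have e1 : l.filter (fun j => x j != Function.update y i b j) =
          l.filter (fun j => x j != y j) := by
        apply List.filter_congr
        intro j hj
        have : j ≠ i := by rintro rfl; exact hl.1 hj
        simp [this]
      rw [e1, hF]
      congr 1
      funext j
      by_cases hj : j = i
      · subst hj; simp [hl.1]
      · simp [hj, hw]
    have h2 : (fun j => if j ∈ i :: l then x j else y j) = Function.update w i (x i) := by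
      funext j
      by_cases hj : j = i
      · subst hj; simp
      · simp [hj, hw]
    have h3 := h1 (y i)
    rw [Function.update_eq_self] at h3
    rw [h2]
    simp only [Gl, splitG, h1, h3, List.filter_cons]
    cases hx : x i <;> cases hy : y i <;> simp [srtL, srt, ← hF, Bool.or_comm]

lemma partition_step (S : Finset (Fin n)) (f : (Fin n → Bool) → Bool)
    (R : (Fin n → Bool) → Finset (Fin n)) (hc : Cov S f R) :
    ∃ (c : Fin n → Fin 16) (r : (Fin n → Bool) → Bool),
      ∑ k, ham (srtL (S.toList.filter (fun j => c j = k)) f) r ≤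
        512 * ∑ x, Real.sqrt ((R x).card) := by
  set l := S.toList with hl
  have hnd : l.Nodup := S.nodup_toList
  have hg := good_all hc l hnd
  set O := ∑ x, Real.sqrt ((R x).card) with hO
  set B : Fin 16 → (Fin n → Fin 16) → Fin n → Bool := fun k c j => decide (j ∈ S ∧ c j = k) with hB
  set H : (Fin n → Bool) → Fin 16 → (Fin n → Fin 16) → Bool :=
    fun x k c => srtL (l.filter (fun j => c j = k)) f x with hH
  have hHG : ∀ x k c, H x k c = Gl f l x (shift x (B k c)) := by
    intro x k c
    rw [Gl_eq f l hnd, hH]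
    have e1 : l.filter (fun j => x j != shift x (B k c) j) = l.filter (fun j => c j = k) := by
      apply List.filter_congr
      intro j hj
      have hjS : j ∈ S := by simpa [hl] using hj
      by_cases h : c j = k <;> simp [shift, hB, hjS, h]
    have e2 : (fun j => if j ∈ l then x j else shift x (B k c) j) = x := by
      funext j
      by_cases hj : j ∈ S <;> simp [hl, hj, shift, hB]
    rw [e1, e2]
  set p : (Fin n → Bool) → ℝ := fun x => (∑ c, if H x 0 c then (1 : ℝ) else 0) / 16 ^ n with hp
  have hsym : ∀ x k, (∑ c, if H x k c then (1 : ℝ) else 0) / 16 ^ n = p x := by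
    intro x k
    rw [hp]
    simp only []
    congr 1
    rw [← Equiv.sum_comp (Equiv.arrowCongr (Equiv.refl (Fin n)) (Equiv.swap 0 k))]
    apply sum_congr rfl
    intro c _
    have : H x k (Equiv.arrowCongr (Equiv.refl (Fin n)) (Equiv.swap 0 k) c) = H x 0 c := by
      rw [hH]
      simp only []
      congr 2
      funext j
      have : (Equiv.swap 0 k) (c j) = k ↔ c j = 0 := by
        rw [← Equiv.eq_symm_apply]; simp
      simp [this]
    rw [this]
  have htal : ∀ x k, p x * (1 - p x) ≤
      16 * ((∑ c, Real.sqrt ((Rl f R l x (shift x (B k c))).card)) / 16 ^ n) := by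
    intro x k
    have := tal_s6 n (H x k) (fun c => Rl f R l x (shift x (B k c))) ?_
    · rw [hsym] at this; exact this
    · intro c j v hne
      rw [hHG, hHG] at hne
      set y := shift x (B k c) with hy
      have hy' : shift x (B k (Function.update c j v)) =
          Function.update y j (shift x (B k (Function.update c j v)) j) := by
        funext i
        by_cases hi : i = j
        · subst hi; simp
        · simp [hi, hy, shift, hB]
      have hy0 : y = Function.update y j (y j) := (Function.update_eq_self j y).symm
      have hjS : j ∈ S := by
        by_contra hj
        apply hne
        congr 1
        rw [hy']
        conv_lhs => rw [hy0]
        congr 1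
        simp [hy, shift, hB, hj]
      have hjl : j ∈ l := by simpa [hl] using hjS
      have h1 := hg.anti j hjl x y
      have h2 := hg.cover j hjS x y
      rw [hy'] at hne ⊢
      generalize shift x (B k (Function.update c j v)) j = b at hne ⊢
      rw [hy0] at hne ⊢
      generalize y j = b' at hne ⊢
      simp only [Function.update_idem] at hne ⊢ h1 h2
      revert hne h1 h2
      cases b <;> cases b' <;> cases Gl f l x (Function.update y j true) <;>
        cases Gl f l x (Function.update y j false) <;> simp <;> tauto
  have hN : (0 : ℝ) < 16 ^ n := by positivity
  set r : (Fin n → Bool) → Bool := fun x => decide (1 / 2 ≤ p x) with hr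
  have hcount : ∀ x k, (∑ c, if H x k c = r x then (0 : ℝ) else 1) ≤
      32 * ∑ c, Real.sqrt ((Rl f R l x (shift x (B k c))).card) := by
    intro x k
    have ht := htal x k
    have hs := hsym x k
    have hsum : (∑ c, if H x k c then (1 : ℝ) else 0) + (∑ c, if H x k c then (0 : ℝ) else 1) 
        = 16 ^ n := by
      rw [← sum_add_distrib]
      calc _ = ∑ c : Fin n → Fin 16, (1 : ℝ) := by
            apply sum_congr rfl; intro c _; split_ifs <;> norm_num
        _ = _ := by simp
    have h0 : 0 ≤ ∑ c, if H x k c then (1 : ℝ) else 0 := by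
      apply sum_nonneg; intro c _; split_ifs <;> norm_num
    have h0' : 0 ≤ ∑ c, if H x k c then (0 : ℝ) else 1 := by
      apply sum_nonneg; intro c _; split_ifs <;> norm_num
    rw [div_eq_iff hN.ne'] at hs
    have ht' : p x * (1 - p x) * 16 ^ n ≤ 
        16 * ∑ c, Real.sqrt ((Rl f R l x (shift x (B k c))).card) := by
      rw [← mul_div_assoc, le_div_iff₀ hN] at ht
      exact ht
    by_cases hpx : 1 / 2 ≤ p x
    · have hrx : r x = true := by simp only [hr, hpx, decide_true]
      rw [hrx]
      have hq : 0 ≤ (1 - p x) * 16 ^ n := by linarith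
      nlinarith
    · have hrx : r x = false := by simp only [hr, hpx, decide_false]
      rw [hrx]
      have e : (∑ c, if H x k c = false then (0 : ℝ) else 1) = ∑ c, if H x k c then (1 : ℝ) else 0 := by
        apply sum_congr rfl; intro c _; cases H x k c <;> simp
      rw [e]
      have hq : 0 ≤ p x * 16 ^ n := by linarith
      nlinarith
  have hk : ∀ k, ∑ c, ham (H · k c) r ≤ 32 * (16 ^ n * O) := by
    intro k
    unfold ham
    rw [sum_comm]
    calc _ ≤ ∑ x, 32 * ∑ c, Real.sqrt ((Rl f R l x (shift x (B k c))).card) :=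
          sum_le_sum fun x _ => hcount x k
      _ = 32 * ∑ c, cost (Rl f R l) (B k c) := by
          rw [← mul_sum, sum_comm]; rfl
      _ ≤ 32 * ∑ c : Fin n → Fin 16, O := by
          gcongr with c; exact cost_all hc l hnd _
      _ = _ := by simp
  have htot : ∑ c, ∑ k, ham (H · k c) r ≤ ∑ c : Fin n → Fin 16, 512 * O := by
    rw [sum_comm]
    calc _ ≤ ∑ k : Fin 16, 32 * (16 ^ n * O) := sum_le_sum fun k _ => hk k
      _ = _ := by simp; ring
  obtain ⟨c, _, hc'⟩ := exists_le_of_sum_le univ_nonempty htot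
  exact ⟨c, r, hc'⟩

lemma sum_sqrt_parts (c : Fin n → Fin 16) (T : Finset (Fin n)) :
    ∑ k, Real.sqrt ((T.filter (fun j => c j = k)).card) ≤ 4 * Real.sqrt (T.card) := by
  have h1 := sq_sum_le_card_mul_sum_sq (s := (univ : Finset (Fin 16)))
    (f := fun k => Real.sqrt ((T.filter (fun j => c j = k)).card))
  have h2 : ∑ k, Real.sqrt ((T.filter (fun j => c j = k)).card) ^ 2 = (T.card : ℝ) := by
    rw [card_eq_sum_card_fiberwise (f := c) (t := univ) (by simp)]
    push_cast
    apply sum_congr rfl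
    intro k _
    rw [Real.sq_sqrt (by positivity)]
  rw [h2] at h1
  have h3 : (0 : ℝ) ≤ T.card := by positivity
  refine (pow_le_pow_iff_left₀ (sum_nonneg fun _ _ => Real.sqrt_nonneg _)
    (by positivity) two_ne_zero).1 ?_
  rw [mul_pow, Real.sq_sqrt h3]
  refine h1.trans ?_
  simp
  linarith

lemma main_ind (f : (Fin n → Bool) → Bool)
    (R : (Fin n → Bool) → Finset (Fin n)) (hc : Cov univ f R) (S : Finset (Fin n)) :
    ∃ h : (Fin n → Bool) → Bool, (∀ j ∈ S, monoAt h j) ∧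
      ham f h ≤ 2112 * ∑ x, Real.sqrt ((R x ∩ S).card) := by
  induction S using Finset.strongInduction with
  | H S ih =>
  obtain ⟨c, r, hcr⟩ := partition_step S f (fun x => R x ∩ S) (by
    intro j hj y h0 h1
    simpa [hj] using hc j (mem_univ _) y h0 h1)
  set O := ∑ x, Real.sqrt ((R x ∩ S).card) with hO
  set L : Fin 16 → List (Fin n) := fun k => S.toList.filter (fun j => c j = k) with hL
  have hmem : ∀ k j, j ∈ L k ↔ j ∈ S ∧ c j = k := by intro k j; simp [hL]
  set e : Fin 16 → ℝ := fun k => ham (srtL (L k) f) r with he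
  have he0 : ∀ k, 0 ≤ e k := fun k => ham_nonneg _ _
  have hE : ∑ k, e k ≤ 512 * O := hcr
  have hex : ∀ T : Finset (Fin 16), ∃ h : (Fin n → Bool) → Bool,
      (∀ k ∈ T, ∀ j ∈ L k, monoAt h j) ∧ ham r h ≤ ∑ k ∈ T, 2 * e k := by
    intro T
    induction T using Finset.induction_on with
    | empty => exact ⟨r, by simp, by simp [ham_self]⟩
    | insert k T hk iht =>
      obtain ⟨h, h1, h2⟩ := iht
      refine ⟨srtL (L k) h, ?_, ?_⟩
      · intro k' hk' j hj
        apply monoAt_srtL_of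
        rcases mem_insert.1 hk' with rfl | hk'
        · exact Or.inl hj
        · exact Or.inr (h1 k' hk' j hj)
      · rw [sum_insert hk]
        have t1 := ham_tri r (srtL (L k) r) (srtL (L k) h)
        have t2 := ham_srtL (L k) r h
        have t3 := ham_tri r (srtL (L k) f) (srtL (L k) r)
        have t4 := ham_srtL (L k) (srtL (L k) f) r
        rw [srtL_of_monoAt (L k) (srtL (L k) f) 
          (fun j hj => monoAt_srtL_of _ _ _ (Or.inl hj))] at t4
        have t5 : ham r (srtL (L k) f) = e k := ham_comm _ _
        have t6 : ham (srtL (L k) f) r = e k := rfl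
        linarith
  obtain ⟨h, hm, hr⟩ := hex univ
  rw [← mul_sum] at hr
  have hO0 : 0 ≤ O := sum_nonneg fun _ _ => Real.sqrt_nonneg _
  have hfin : ∀ k g, (∀ j ∈ L k, monoAt g j) → ham f h ≤ 2 * ham f g + e k + 2 * ∑ k, e k := by
    intro k g hg
    have t1 := ham_tri f (srtL (L k) f) h
    have t2 := ham_tri (srtL (L k) f) r h
    have t3 := ham_tri f g (srtL (L k) f)
    have t4 := ham_srtL (L k) g f
    rw [srtL_of_monoAt (L k) g hg] at t4
    have t5 : ham (srtL (L k) f) r = e k := rfl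
    have t6 := ham_comm f g
    linarith
  refine ⟨h, fun j hj => hm (c j) (mem_univ _) j ((hmem _ _).2 ⟨hj, rfl⟩), ?_⟩
  by_cases hemp : ∃ k, L k = []
  · obtain ⟨k, hk⟩ := hemp
    have t1 := hfin k f (by simp [hk])
    rw [ham_self] at t1
    have t2 : e k ≤ ∑ k, e k := single_le_sum (fun k _ => he0 k) (mem_univ k)
    linarith
  · push Not at hemp
    have hss : ∀ k, S.filter (fun j => c j = k) ⊂ S := by
      intro k
      refine (filter_subset _ _).ssubset_of_ne ?_
      intro heq
      obtain ⟨k', hk'⟩ : ∃ k', k' ≠ k := exists_ne k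
      obtain ⟨j, hj⟩ := List.exists_mem_of_ne_nil _ (hemp k')
      rw [hmem] at hj
      have := hj.1
      rw [← heq, mem_filter] at this
      exact hk' (hj.2 ▸ this.2)
    choose g hg1 hg2 using fun k => ih _ (hss k)
    have t1 : ∀ k, ham f h ≤ 2 * (2112 * ∑ x, Real.sqrt (((R x ∩ S).filter (fun j => c j = k)).card))
        + e k + 2 * ∑ k, e k := by
      intro k
      have a1 := hfin k (g k) (fun j hj => hg1 k j (by simpa [hmem] using hj))
      have a2 := hg2 k
      simp only [inter_filter] at a2
      linarith
    have t2 : ∑ k : Fin 16, ∑ x, Real.sqrt (((R x ∩ S).filter (fun j => c j = k)).card) ≤ 4 * O := by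
      rw [sum_comm, hO, mul_sum]
      exact sum_le_sum fun x _ => sum_sqrt_parts c (R x ∩ S)
    have t3 := sum_le_sum (s := (univ : Finset (Fin 16))) fun k _ => t1 k
    rw [sum_add_distrib, sum_add_distrib, ← mul_sum, ← mul_sum] at t3
    simp only [sum_const, card_univ, Fintype.card_fin, nsmul_eq_mul] at t3
    push_cast at t3
    linarith

/-- robust isoperimetric inequality. For every `f` which is
`ε`-far from monotone and every red/blue coloring of the decreasing edges
(`col e i = true` means the edge along dimension `i` at lower endpoint `e`
is red), `(1/2^n)·Σ_x √(I⁻_{f,red}(x)) + (1/2^n)·Σ_y √(I⁻_{f,blue}(y)) ≥ c·ε`. -/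
theorem stmt6 : ∃ c : ℝ, 0 < c ∧ ∀ n : ℕ, 1 ≤ n → ∀ ε : ℝ, 0 < ε →
    ∀ f : (Fin n → Bool) → Bool, ε ≤ distMono f →
    ∀ col : (Fin n → Bool) → Fin n → Bool,
    c * ε ≤ (1 / 2 ^ n) * (∑ x : Fin n → Bool, Real.sqrt (IredCol f col x))
          + (1 / 2 ^ n) * (∑ y : Fin n → Bool, Real.sqrt (IblueCol f col y)) := by
  refine ⟨1 / 2112, by norm_num, ?_⟩
  intro n _ ε _ f hε col
  set R : (Fin n → Bool) → Finset (Fin n) := fun x =>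
    univ.filter fun i => decEdge f x i ∧ col (Function.update x i false) i = f x with hR
  have hcov : Cov univ f R := by
    intro j _ y h0 h1
    simp only [hR, mem_filter, mem_univ, true_and, decEdge, Function.update_idem, h0, h1]
    cases col (Function.update y j false) j <;> simp
  obtain ⟨h, hm, hh⟩ := main_ind f R hcov univ
  have hmono : monoB h := monoB_of h fun j => hm j (mem_univ j)
  have hd : distMono f ≤ ham f h / 2 ^ n := by
    apply csInf_le
    · refine ⟨0, ?_⟩
      rintro d ⟨g, _, rfl⟩
      positivity
    · refine ⟨h, hmono, ?_⟩
      congr 1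
      unfold ham
      rw [card_filter]
      push_cast
      apply sum_congr rfl
      intro x _
      by_cases hx : f x = h x <;> simp [hx]
  have hs : ∑ x, Real.sqrt ((R x ∩ univ).card) =
      (∑ x : Fin n → Bool, Real.sqrt (IredCol f col x)) +
        ∑ y : Fin n → Bool, Real.sqrt (IblueCol f col y) := by
    rw [← sum_add_distrib]
    apply sum_congr rfl
    intro x _
    rw [inter_univ]
    cases hx : f x <;> simp [hR, IredCol, IblueCol, hx]
  rw [hs] at hh
  have hN : (0 : ℝ) < 2 ^ n := by positivity
  rw [← mul_add]
  have : ε * 2 ^ n ≤ ham f h := by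
    rw [← le_div_iff₀ hN]; exact hε.trans hd
  rw [one_div_mul_eq_div (2 ^ n : ℝ), le_div_iff₀ hN]
  linarith
end

section
/- For every constant κ ∈ (0, 1/2) there exist c > 0 and n₀ such that the following holds for every multiple of 4, n ≥ n₀, every M ⊆ [n] with |M| = n/2, and every P ⊆ Ψ_M with |P| = |Ψ_M|/2: every completion F of the D⁻ instance determined by (M, P) satisfies dist(F, Unate) ≥ c/√n. -/
open Finset

attribute [local instance] Classical.propDecidable

variable {n : ℕ}

section Cube

noncomputable def sg (b : Bool) : ℝ := if b = true then 1 else -1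

noncomputable def cw {ι : Type} [Fintype ι] (w : ι → Bool) : ℕ :=
  (univ.filter fun i => w i = true).card

lemma cb_upper (k : ℕ) : (Nat.centralBinom k) ^ 2 * (2 * k + 1) ≤ 16 ^ k := by
  induction k with
  | zero => simp
  | succ k ih =>
    have h := Nat.succ_mul_centralBinom_succ k
    have h2 : (k+1)^2 * ((Nat.centralBinom (k+1)) ^ 2 * (2 * (k+1) + 1))
        ≤ (k+1)^2 * 16 ^ (k+1) := by
      calc (k+1)^2 * ((Nat.centralBinom (k+1)) ^ 2 * (2 * (k+1) + 1))
          = ((k+1) * Nat.centralBinom (k+1))^2 * (2*k+3) := by ring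
        _ = (4 * (2*k+1) * (2*k+3)) * (Nat.centralBinom k ^2 * (2*k+1)) := by rw [h]; ring
        _ ≤ (4 * (2*k+1) * (2*k+3)) * 16^k := by gcongr
        _ ≤ (16 * (k+1)^2) * 16^k := Nat.mul_le_mul_right _ (by nlinarith)
        _ = _ := by ring
    exact Nat.le_of_mul_le_mul_left h2 (by positivity)

lemma cb_lower (k : ℕ) (hk : 1 ≤ k) : 16 ^ k ≤ 4 * k * (Nat.centralBinom k) ^ 2 := by
  induction k, hk using Nat.le_induction with
  | base => simp [Nat.centralBinom]
  | succ k hk ih =>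
    have h := Nat.succ_mul_centralBinom_succ k
    have h2 : (k+1)^2 * 16 ^ (k+1) ≤ (k+1)^2 * (4 * (k+1) * (Nat.centralBinom (k+1)) ^ 2) := by
      calc (k+1)^2 * 16 ^ (k+1) = 16 * (k+1)^2 * 16^k := by ring
        _ ≤ 16 * (k+1)^2 * (4 * k * (Nat.centralBinom k) ^ 2) := by gcongr
        _ = (16 * (k+1) * (4 * k * (k+1))) * (Nat.centralBinom k) ^ 2 := by ring
        _ ≤ (16 * (k+1) * (2*k+1)^2) * (Nat.centralBinom k) ^ 2 := by gcongr; nlinarith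
        _ = 4 * (k+1) * (2 * (2*k+1) * Nat.centralBinom k)^2 := by ring
        _ = 4 * (k+1) * ((k+1) * Nat.centralBinom (k+1))^2 := by rw [h]
        _ = _ := by ring
    exact Nat.le_of_mul_le_mul_left h2 (by positivity)

lemma cb_upper_real (k : ℕ) : (Nat.centralBinom k : ℝ) * √(2 * k + 1) ≤ 4 ^ k := by
  have h := cb_upper k
  have h' : (Nat.centralBinom k : ℝ) ^ 2 * (2 * k + 1) ≤ 16 ^ k := by exact_mod_cast h
  refine (pow_le_pow_iff_left₀ (by positivity) (by positivity) two_ne_zero).mp ?_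
  rw [mul_pow, Real.sq_sqrt (by positivity), ← pow_mul, mul_comm k 2, pow_mul]
  norm_num
  exact h'

lemma layer_card {ι : Type} [Fintype ι] [DecidableEq ι] (j : ℕ) :
    (univ.filter fun w : ι → Bool => cw w = j).card = (Fintype.card ι).choose j := by
  rw [← Finset.card_univ, ← Finset.card_powersetCard]
  refine Finset.card_nbij' (fun w => univ.filter fun i => w i = true)
    (fun s i => decide (i ∈ s)) ?_ ?_ ?_ ?_
  · intro w hw
    have h := (Finset.mem_filter.mp (Finset.mem_coe.mp hw)).2
    exact Finset.mem_coe.mpr (Finset.mem_powersetCard.mpr ⟨Finset.subset_univ _, h⟩)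
  · intro s hs
    have h := (Finset.mem_powersetCard.mp (Finset.mem_coe.mp hs)).2
    refine Finset.mem_coe.mpr (Finset.mem_filter.mpr ⟨Finset.mem_univ _, ?_⟩)
    rw [← h, cw]
    congr 1
    ext i
    simp
  · intro w hw
    funext i
    simp
  · intro s hs
    ext i
    simp

lemma anticonc {ι : Type} [Fintype ι] [DecidableEq ι] (k : ℕ) (hι : Fintype.card ι = 2 * k) (K : ℝ) (hK : 0 ≤ K) :
    ((univ.filter fun w : ι → Bool => |(cw w : ℝ) - k| ≤ K).card : ℝ) * √(2 * k + 1)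
      ≤ (2 * K + 1) * 4 ^ k := by
  set m := ⌊K⌋₊ with hm
  have h1 : (univ.filter fun w : ι → Bool => |(cw w : ℝ) - k| ≤ K) ⊆
      (Finset.Icc (k - m) (k + m)).biUnion
        (fun j => univ.filter fun w : ι → Bool => cw w = j) := by
    intro w hw
    simp only [mem_filter, mem_univ, true_and] at hw
    simp only [mem_biUnion, mem_filter, mem_univ, true_and, exists_eq_right', Finset.mem_Icc]
    rw [abs_le] at hw
    constructor
    · rcases Nat.le_total k (cw w) with h | h
      · omega
      · have : k - cw w ≤ m := by
          apply Nat.le_floor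
          push_cast [h]; linarith
        omega
    · rcases Nat.le_total k (cw w) with h | h
      · have : cw w - k ≤ m := by
          apply Nat.le_floor
          push_cast [h]; linarith
        omega
      · omega
  have h2 := (Finset.card_le_card h1).trans Finset.card_biUnion_le
  have h3 : ∑ j ∈ Finset.Icc (k - m) (k + m), (univ.filter fun w : ι → Bool => cw w = j).card
      ≤ (2 * m + 1) * Nat.centralBinom k := by
    calc _ ≤ ∑ j ∈ Finset.Icc (k - m) (k + m), Nat.centralBinom k := by
          apply Finset.sum_le_sum
          intro j _
          rw [layer_card, hι]
          exact Nat.choose_le_centralBinom j k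
      _ ≤ _ := by
          rw [Finset.sum_const, Nat.card_Icc, smul_eq_mul]
          gcongr
          omega
  have h4 : ((univ.filter fun w : ι → Bool => |(cw w : ℝ) - k| ≤ K).card : ℝ)
      ≤ (2 * m + 1) * Nat.centralBinom k := by exact_mod_cast h2.trans h3
  have h5 : (m : ℝ) ≤ K := Nat.floor_le hK
  calc _ ≤ ((2 * m + 1) * Nat.centralBinom k) * √(2 * k + 1) := by gcongr
    _ = (2 * m + 1) * (Nat.centralBinom k * √(2 * k + 1)) := by ring
    _ ≤ (2 * K + 1) * 4 ^ k := by
      gcongr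
      exact cb_upper_real k

noncomputable def SS {ι : Type} (T : Finset ι) (w : ι → Bool) : ℝ := ∑ i ∈ T, sg (w i)

lemma SS_univ {ι : Type} [Fintype ι] (k : ℕ) (hι : Fintype.card ι = 2 * k) (w : ι → Bool) :
    SS univ w = 2 * ((cw w : ℝ) - k) := by
  have : ∀ b : Bool, sg b = 2 * (if b = true then (1:ℝ) else 0) - 1 := by
    intro b; cases b <;> norm_num [sg]
  simp only [SS, this, Finset.sum_sub_distrib, ← Finset.mul_sum, cw]
  simp [hι]
  ring

lemma sum_abs {ι : Type} [Fintype ι] [DecidableEq ι] (k : ℕ) (hι : Fintype.card ι = 2 * k) (hk : 100 ≤ k) :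
    √k / 4 * 4 ^ k ≤ ∑ w : ι → Bool, |SS univ w| := by
  have hs : 10 ≤ √(k:ℝ) := by
    apply Real.le_sqrt_of_sq_le
    have : (100:ℝ) ≤ k := by exact_mod_cast hk
    linarith
  have hsq : √(k:ℝ) ^ 2 = k := Real.sq_sqrt (by positivity)
  have hac := anticonc (ι := ι) k hι (√k / 4) (by positivity)
  set B := (univ.filter fun w : ι → Bool => |(cw w : ℝ) - k| ≤ √k / 4) with hB
  have hr : √k * (6/5) ≤ √(2 * k + 1 : ℝ) := by
    apply Real.le_sqrt_of_sq_le
    nlinarith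
  have hBc : (B.card : ℝ) ≤ 1 / 2 * 4 ^ k := by
    have h1 : (B.card : ℝ) * (√k * (6/5)) ≤ (2 * (√k / 4) + 1) * 4 ^ k := by
      refine le_trans ?_ hac
      gcongr
    have h2 : (2 * (√k / 4) + 1) * 4 ^ k ≤ (1 / 2 * 4 ^ k) * (√k * (6/5)) := by
      have : (0:ℝ) < 4 ^ k := by positivity
      nlinarith
    exact le_of_mul_le_mul_right (h1.trans h2) (by positivity)
  have hcard : (B.card : ℝ) + (Bᶜ.card : ℝ) = 4 ^ k := by
    have := Finset.card_add_card_compl B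
    rw [Fintype.card_fun, hι, Fintype.card_bool, pow_mul] at this
    exact_mod_cast this
  calc √k / 4 * 4 ^ k ≤ (Bᶜ.card : ℝ) * (√k / 2) := by
        nlinarith
    _ = ∑ w ∈ Bᶜ, √k / 2 := by simp
    _ ≤ ∑ w ∈ Bᶜ, |SS univ w| := by
        apply Finset.sum_le_sum
        intro w hw
        simp only [hB, mem_compl, mem_filter, mem_univ, true_and, not_le] at hw
        rw [SS_univ k hι, abs_mul, abs_two]
        linarith
    _ ≤ _ := Finset.sum_le_sum_of_subset_of_nonneg (Finset.subset_univ _)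
        (fun _ _ _ => abs_nonneg _)

lemma sg_sq (b : Bool) : sg b * sg b = 1 := by cases b <;> norm_num [sg]
lemma sg_not (b : Bool) : sg (!b) = - sg b := by cases b <;> norm_num [sg]

noncomputable def fl {ι : Type} [DecidableEq ι] (i : ι) (w : ι → Bool) : ι → Bool := Function.update w i (!(w i))

lemma fl_invol {ι : Type} [DecidableEq ι] (i : ι) : Function.Involutive (fl (ι := ι) i) := by
  intro w; simp [fl]

lemma sum_fl {ι : Type} [Fintype ι] [DecidableEq ι] (i : ι) (f : (ι → Bool) → ℝ) :
    ∑ w, f (fl i w) = ∑ w, f w := 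
  Equiv.sum_comp ((fl_invol i).toPerm) f

lemma cross {ι : Type} [Fintype ι] [DecidableEq ι] (i j : ι) (hij : i ≠ j) :
    ∑ w : ι → Bool, sg (w i) * sg (w j) = 0 := by
  have h := sum_fl i (fun w : ι → Bool => sg (w i) * sg (w j))
  have h2 : ∀ w : ι → Bool, sg (fl i w i) * sg (fl i w j) = -(sg (w i) * sg (w j)) := by
    intro w
    simp [fl, hij.symm, sg_not]
  simp only [h2, Finset.sum_neg_distrib] at h
  linarith

lemma sum_sq {ι : Type} [Fintype ι] [DecidableEq ι] (T : Finset ι) :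
    ∑ w : ι → Bool, (SS T w) ^ 2 = T.card * 2 ^ (Fintype.card ι) := by
  simp only [SS, sq, Finset.sum_mul_sum]
  rw [Finset.sum_comm]
  have : ∀ i ∈ T, ∑ w : ι → Bool, ∑ j ∈ T, sg (w i) * sg (w j) = 2 ^ (Fintype.card ι) := by
    intro i hi
    rw [Finset.sum_comm, Finset.sum_eq_single i]
    · simp [sg_sq]
    · intro j _ hj; exact cross i j hj.symm
    · intro h; exact absurd hi h
  rw [Finset.sum_congr rfl this]
  simp

lemma sg_mono {a b : Bool} (h : a ≤ b) : sg a ≤ sg b := by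
  cases a <;> cases b <;> first | (exact absurd h (by decide)) | norm_num [sg]

lemma corr_nonneg {ι : Type} [Fintype ι] [DecidableEq ι] (i : ι) (g : (ι → Bool) → Bool)
    (hg : ∀ w, g (Function.update w i false) ≤ g (Function.update w i true)) :
    0 ≤ ∑ w : ι → Bool, sg (g w) * sg (w i) := by
  have h := sum_fl i (fun w : ι → Bool => sg (g w) * sg (w i))
  have h2 : 0 ≤ ∑ w : ι → Bool, (sg (g w) * sg (w i) + sg (g (fl i w)) * sg (fl i w i)) := by
    apply Finset.sum_nonneg
    intro w _
    have h3 := sg_mono (hg w)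
    cases hw : w i
    · have e : Function.update w i false = w := by rw [← hw]; simp
      rw [e] at h3
      simp [fl, hw, sg] at h3 ⊢
      linarith
    · have e : Function.update w i true = w := by rw [← hw]; simp
      rw [e] at h3
      simp [fl, hw, sg] at h3 ⊢
      linarith
  rw [Finset.sum_add_distrib] at h2
  linarith

lemma corr_nonpos {ι : Type} [Fintype ι] [DecidableEq ι] (i : ι) (g : (ι → Bool) → Bool)
    (hg : ∀ w, g (Function.update w i true) ≤ g (Function.update w i false)) :
    ∑ w : ι → Bool, sg (g w) * sg (w i) ≤ 0 := by
  have := corr_nonneg i (fun w => !(g w)) (fun w => by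
    have := hg w
    revert this
    cases g (Function.update w i true) <;> cases g (Function.update w i false) <;> decide)
  simp only [sg_not, neg_mul, Finset.sum_neg_distrib] at this
  linarith

/-- Cauchy–Schwarz step. -/
lemma cs_step {ι : Type} [Fintype ι] [DecidableEq ι] (k : ℕ) (hι : Fintype.card ι = 2 * k) (hk : 100 ≤ k)
    (T : Finset ι) (h g : (ι → Bool) → Bool)
    (H : √k / 8 * 4 ^ k ≤ |∑ w, (sg (h w) - sg (g w)) * SS T w|) :
    1 / 512 * 4 ^ k ≤ ((univ.filter fun w => h w ≠ g w).card : ℝ) := by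
  have hcs := Finset.sum_mul_sq_le_sq_mul_sq univ (fun w => sg (h w) - sg (g w)) (fun w => SS T w)
  rw [sum_sq, hι] at hcs
  have e1 : ∑ w, (sg (h w) - sg (g w)) ^ 2 = 4 * ((univ.filter fun w => h w ≠ g w).card : ℝ) := by
    rw [Finset.card_filter]
    push_cast
    rw [Finset.mul_sum]
    apply Finset.sum_congr rfl
    intro w _
    cases h w <;> cases g w <;> norm_num [sg]
  rw [e1] at hcs
  set D := ((univ.filter fun w => h w ≠ g w).card : ℝ) with hD
  have hT : (T.card : ℝ) ≤ 2 * k := by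
    have := Finset.card_le_univ T
    rw [hι] at this
    exact_mod_cast this
  have h1 : (√k / 8 * 4 ^ k) ^ 2 ≤ 4 * D * (2 * k * 4 ^ k) := by
    calc (√k / 8 * 4 ^ k) ^ 2 ≤ |∑ w, (sg (h w) - sg (g w)) * SS T w| ^ 2 := by gcongr
      _ = (∑ w, (sg (h w) - sg (g w)) * SS T w) ^ 2 := sq_abs _
      _ ≤ _ := hcs
      _ ≤ 4 * D * (2 * k * 4 ^ k) := by
        rw [pow_mul]; norm_num
        have : 0 ≤ D := by positivity
        gcongr
  have hsq : √(k:ℝ) ^ 2 = k := Real.sq_sqrt (by positivity)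
  have h2 : (√k / 8 * 4 ^ k) ^ 2 = (1/512 * 4 ^ k) * (8 * k * 4 ^ k : ℝ) := by
    rw [mul_pow, div_pow, hsq]; ring
  have hk0 : (0:ℝ) < k := by exact_mod_cast (by omega : 0 < k)
  rw [h2] at h1
  refine le_of_mul_le_mul_right (h1.trans (le_of_eq ?_)) (by positivity : (0:ℝ) < 8 * k * 4 ^ k)
  ring

def uni {ι : Type} (σ : ι → Bool) (g : (ι → Bool) → Bool) : Prop :=
  ∀ x y : ι → Bool, (∀ i, xor (x i) (σ i) ≤ xor (y i) (σ i)) → g x ≤ g y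

lemma uni_up {ι : Type} [DecidableEq ι] (σ : ι → Bool) (g : (ι → Bool) → Bool) (hg : uni σ g) (i : ι)
    (hi : σ i = false) (w) : g (Function.update w i false) ≤ g (Function.update w i true) := by
  apply hg
  intro j
  by_cases h : j = i
  · subst h; simp [hi]
  · simp [h]

lemma uni_down {ι : Type} [DecidableEq ι] (σ : ι → Bool) (g : (ι → Bool) → Bool) (hg : uni σ g) (i : ι)
    (hi : σ i = true) (w) : g (Function.update w i true) ≤ g (Function.update w i false) := by
  apply hg
  intro j
  by_cases h : j = i
  · subst h; simp [hi]
  · simp [h]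

lemma corr_SS {ι : Type} [Fintype ι] [DecidableEq ι] (T : Finset ι) (g : (ι → Bool) → Bool) :
    ∑ w, sg (g w) * SS T w = ∑ i ∈ T, ∑ w, sg (g w) * sg (w i) := by
  simp only [SS, Finset.mul_sum]
  rw [Finset.sum_comm]

lemma core {ι : Type} [Fintype ι] [DecidableEq ι] (k : ℕ) (hι : Fintype.card ι = 2 * k) (hk : 100 ≤ k)
    (σ : ι → Bool) :
    (∀ g, uni σ g → 1 / 512 * 4 ^ k ≤
      ((univ.filter fun w : ι → Bool => decide (k < cw w) ≠ g w).card : ℝ)) ∨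
    (∀ g, uni σ g → 1 / 512 * 4 ^ k ≤
      ((univ.filter fun w : ι → Bool => (!decide (k < cw w)) ≠ g w).card : ℝ)) := by
  set A := univ.filter fun i => σ i = false with hA
  set B := univ.filter fun i => ¬ (σ i = false) with hB
  set mj : (ι → Bool) → Bool := fun w => decide (k < cw w) with hmj
  have hS : ∀ w : ι → Bool, SS A w + SS B w = SS univ w := by
    intro w
    exact Finset.sum_filter_add_sum_filter_not _ _ _
  have hmS : ∀ w : ι → Bool, sg (mj w) * SS univ w = |SS univ w| := by
    intro w
    rw [SS_univ k hι]
    by_cases h : k < cw w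
    · have h' : (k:ℝ) < cw w := by exact_mod_cast h
      rw [abs_of_nonneg (by linarith)]
      simp [hmj, sg, h]
    · have h' : (cw w : ℝ) ≤ k := by exact_mod_cast (not_lt.mp h)
      rw [abs_of_nonpos (by linarith)]
      simp [hmj, sg, h]
  have hsum : ∑ w, sg (mj w) * SS A w + ∑ w, sg (mj w) * SS B w = ∑ w : ι → Bool, |SS univ w| := by
    rw [← Finset.sum_add_distrib]
    apply Finset.sum_congr rfl
    intro w _
    rw [← mul_add, hS, hmS]
  have hL := sum_abs (ι := ι) k hι hk
  by_cases hc : √k / 8 * 4 ^ k ≤ ∑ w, sg (mj w) * SS B w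
  · left
    intro g hg
    apply cs_step k hι hk B mj g
    have : ∑ w, sg (g w) * SS B w ≤ 0 := by
      rw [corr_SS]
      apply Finset.sum_nonpos
      intro i hi
      apply corr_nonpos
      apply uni_down σ g hg
      simpa [hB] using hi
    refine le_trans ?_ (le_abs_self _)
    simp only [sub_mul, Finset.sum_sub_distrib]
    linarith
  · right
    intro g hg
    apply cs_step k hι hk A (fun w => !(mj w)) g
    have : 0 ≤ ∑ w, sg (g w) * SS A w := by
      rw [corr_SS]
      apply Finset.sum_nonneg
      intro i hi
      apply corr_nonneg
      apply uni_up σ g hg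
      simpa [hA] using hi
    refine le_trans ?_ (neg_le_abs _)
    simp only [sub_mul, Finset.sum_sub_distrib, sg_not, neg_mul, Finset.sum_neg_distrib]
    linarith

end Cube
section Main

noncomputable def jn (M : Finset (Fin n)) (z : ↥M → Bool) (w : {i // i ∉ M} → Bool) :
    Fin n → Bool := fun i => if h : i ∈ M then z ⟨i, h⟩ else w ⟨i, h⟩

lemma jn_mem (M : Finset (Fin n)) (z : ↥M → Bool) (w : {i // i ∉ M} → Bool) (i : ↥M) :
    jn M z w i.1 = z i := by
  simp [jn, i.2]

lemma jn_not_mem (M : Finset (Fin n)) (z : ↥M → Bool) (w : {i // i ∉ M} → Bool)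
    (i : {i // i ∉ M}) : jn M z w i.1 = w i := by
  simp [jn, i.2]

lemma wt_jn (M : Finset (Fin n)) (z : ↥M → Bool) (w : {i // i ∉ M} → Bool) :
    wt M (jn M z w) = cw z := by
  rw [wt, cw, Finset.card_filter, Finset.card_filter,
    Finset.sum_subtype M (p := fun i => i ∈ M) (fun _ => Iff.rfl)]
  apply Finset.sum_congr rfl
  intro i _
  rw [jn_mem M z w i]

lemma wt_jn' (M : Finset (Fin n)) (z : ↥M → Bool) (w : {i // i ∉ M} → Bool) :
    wt Mᶜ (jn M z w) = cw w := by
  rw [wt, cw, Finset.card_filter, Finset.card_filter,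
    Finset.sum_subtype Mᶜ (p := fun i => i ∉ M) (fun _ => Finset.mem_compl)]
  apply Finset.sum_congr rfl
  intro i _
  rw [jn_not_mem M z w i]

lemma erased_small (κ : ℝ) (h0 : 0 < κ) (h1 : κ < 1 / 2) :
    ∃ n₀ : ℕ, ∀ k : ℕ, n₀ ≤ 4 * k →
      (2 * ((4 * k : ℕ) : ℝ) ^ κ + 1) ≤ 1 / 1024 * √(2 * k + 1) := by
  have ht := (tendsto_rpow_atTop (by linarith : 0 < 1 / 2 - κ)).comp
    (tendsto_natCast_atTop_atTop (R := ℝ))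
  obtain ⟨N, hN⟩ := Filter.eventually_atTop.mp (ht.eventually_ge_atTop 6144)
  refine ⟨max N 4, fun k hk => ?_⟩
  have hk1 := hN (4 * k) (le_trans (le_max_left _ _) hk)
  have hk2 : 4 ≤ 4 * k := le_trans (le_max_right _ _) hk
  simp only [Function.comp] at hk1
  set x : ℝ := ((4 * k : ℕ) : ℝ) with hx
  have hx1 : 1 ≤ x := by rw [hx]; exact_mod_cast (by omega : 1 ≤ 4 * k)
  have e : x ^ κ * x ^ (1 / 2 - κ) = √x := by
    rw [← Real.rpow_add (by linarith), Real.sqrt_eq_rpow]; congr 1; ring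
  have hp : 1 ≤ x ^ κ := Real.one_le_rpow hx1 h0.le
  have hr : √x / 2 ≤ √(2 * k + 1 : ℝ) := by
    apply Real.le_sqrt_of_sq_le
    rw [div_pow, Real.sq_sqrt (by linarith), hx]
    push_cast
    have : (0:ℝ) ≤ k := by positivity
    linarith
  nlinarith

lemma unate_uni (M : Finset (Fin n)) (g : (Fin n → Bool) → Bool) (σ : Fin n → Bool)
    (h : monoB (fun x => g (fun i => xor (x i) (σ i)))) (z : ↥M → Bool) :
    uni (fun i : {i // i ∉ M} => σ i.1) (fun w => g (jn M z w)) := by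
  intro x y hxy
  have := h (fun i => xor (jn M z x i) (σ i)) (fun i => xor (jn M z y i) (σ i)) (by
    intro i
    by_cases hi : i ∈ M
    · simp [jn, hi]
    · have := hxy ⟨i, hi⟩
      simpa [jn, hi] using this)
  simpa using this

lemma count_fibers (M : Finset (Fin n)) (Q : Finset (↥M → Bool)) (F g : (Fin n → Bool) → Bool) :
    ∑ z ∈ Q, (univ.filter fun w => F (jn M z w) ≠ g (jn M z w)).card
      ≤ (univ.filter fun x => F x ≠ g x).card := by
  rw [← Finset.card_sigma]
  apply Finset.card_le_card_of_injOn (fun p => jn M p.1 p.2)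
  · intro p hp
    have := (Finset.mem_filter.mp (Finset.mem_sigma.mp (Finset.mem_coe.mp hp)).2).2
    exact Finset.mem_coe.mpr (Finset.mem_filter.mpr ⟨Finset.mem_univ _, this⟩)
  · rintro ⟨z, w⟩ _ ⟨z', w'⟩ _ h
    simp only at h
    have h1 : z = z' := by
      funext i; rw [← jn_mem M z w i, h, jn_mem]
    have h2 : w = w' := by
      funext i; rw [← jn_not_mem M z w i, h, jn_not_mem]
    subst h1 h2; rfl

lemma final_count (M : Finset (Fin n)) (k : ℕ) (hk : 100 ≤ k) (hn : n = 4 * k)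
    (κ : ℝ) (hM : M.card = n / 2)
    (he : (2 * ((4 * k : ℕ) : ℝ) ^ κ + 1) ≤ 1 / 1024 * √(2 * k + 1))
    (P : Finset (↥M → Bool)) (hP : P ⊆ PsiSet M) (hPc : 2 * P.card = (PsiSet M).card)
    (F : (Fin n → Bool) → Bool) (hF : DminusCompletion κ M P F)
    (g : (Fin n → Bool) → Bool) (hg : unate g) :
    1 / 2048 / √n * 2 ^ n ≤ ((univ.filter fun x => F x ≠ g x).card : ℝ) := by
  obtain ⟨σ, hσ⟩ := hg
  have hc1 : Fintype.card ↥M = 2 * k := by rw [Fintype.card_coe, hM]; omega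
  have hc2 : Fintype.card {i // i ∉ M} = 2 * k := by
    have := Fintype.card_subtype_compl (fun i : Fin n => i ∈ M)
    rw [Fintype.card_fin] at this
    rw [this]
    have h3 : Fintype.card {i // i ∈ M} = 2 * k := hc1
    rw [h3]; omega
  have hn4 : n / 4 = k := by omega
  have hΨ : PsiSet M = univ.filter fun z : ↥M → Bool => cw z = k := by
    unfold PsiSet
    rw [hn4]
    rfl
  have hΨc : (PsiSet M).card = Nat.centralBinom k := by
    rw [hΨ, layer_card, hc1]; rfl
  -- erased points
  set E : Finset ({i // i ∉ M} → Bool) :=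
    univ.filter fun w => |(cw w : ℝ) - k| ≤ ((4 * k : ℕ) : ℝ) ^ κ with hE
  have hEc : (E.card : ℝ) ≤ 1 / 1024 * 4 ^ k := by
    have h1 := anticonc (ι := {i // i ∉ M}) k hc2 (((4 * k : ℕ) : ℝ) ^ κ) (by positivity)
    have h2 : (2 * ((4 * k : ℕ) : ℝ) ^ κ + 1) * 4 ^ k ≤ (1 / 1024 * 4 ^ k) * √(2 * k + 1) := by
      calc _ ≤ (1 / 1024 * √(2 * k + 1)) * 4 ^ k := by gcongr
        _ = _ := by ring
    exact le_of_mul_le_mul_right (h1.trans h2) (by positivity)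
  have hval : ∀ z ∈ PsiSet M, ∀ w, w ∉ E → F (jn M z w) =
      if z ∈ P then decide (k < cw w) else !decide (k < cw w) := by
    intro z hz w hw
    have hz' : cw z = k := by rw [hΨ] at hz; exact (Finset.mem_filter.mp hz).2
    have h := hF.2.2 (jn M z w) (by rw [wt_jn, hz', hn4]) (by
      rintro ⟨_, h2⟩
      apply hw
      rw [wt_jn'] at h2
      refine Finset.mem_filter.mpr ⟨Finset.mem_univ _, ?_⟩
      subst hn
      have : (((4 * k : ℕ) : ℝ)) / 4 = k := by push_cast; ring
      rwa [this] at h2)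
    have e : (fun i : ↥M => jn M z w i.1) = z := by funext i; exact jn_mem M z w i
    rw [e] at h
    rw [h]
    simp only [MajBar, wt_jn', hn4]
  have hper : ∀ (f : ({i // i ∉ M} → Bool) → Bool) (z : ↥M → Bool),
      (∀ w, w ∉ E → F (jn M z w) = f w) →
      1 / 512 * 4 ^ k ≤ ((univ.filter fun w => f w ≠ g (jn M z w)).card : ℝ) →
      1 / 1024 * 4 ^ k ≤ ((univ.filter fun w => F (jn M z w) ≠ g (jn M z w)).card : ℝ) := by
    intro f z h1 h2
    have hsub : (univ.filter fun w => f w ≠ g (jn M z w)) ⊆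
        (univ.filter fun w => F (jn M z w) ≠ g (jn M z w)) ∪ E := by
      intro w hw
      by_cases hwE : w ∈ E
      · exact Finset.mem_union_right _ hwE
      · apply Finset.mem_union_left
        refine Finset.mem_filter.mpr ⟨Finset.mem_univ _, ?_⟩
        rw [h1 w hwE]
        exact (Finset.mem_filter.mp hw).2
    have h3 := (Finset.card_le_card hsub).trans (Finset.card_union_le _ _)
    have h4 : ((univ.filter fun w => f w ≠ g (jn M z w)).card : ℝ) ≤
        ((univ.filter fun w => F (jn M z w) ≠ g (jn M z w)).card : ℝ) + E.card := by
      exact_mod_cast h3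
    linarith
  have hQ : ∃ Q : Finset (↥M → Bool), 2 * Q.card = Nat.centralBinom k ∧
      ∀ z ∈ Q, 1 / 1024 * 4 ^ k ≤
        ((univ.filter fun w => F (jn M z w) ≠ g (jn M z w)).card : ℝ) := by
    rcases core k hc2 hk (fun i : {i // i ∉ M} => σ i.1) with h | h
    · refine ⟨P, by rw [hPc, hΨc], fun z hz => ?_⟩
      refine hper _ z (fun w hw => ?_) (h _ (unate_uni M g σ hσ z))
      rw [hval z (hP hz) w hw, if_pos hz]
    · refine ⟨PsiSet M \ P, ?_, fun z hz => ?_⟩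
      · rw [Finset.card_sdiff_of_subset hP]; omega
      refine hper _ z (fun w hw => ?_) (h _ (unate_uni M g σ hσ z))
      rw [Finset.mem_sdiff] at hz
      rw [hval z hz.1 w hw, if_neg hz.2]
  obtain ⟨Q, hQc, hQ⟩ := hQ
  have h1 : (Q.card : ℝ) * (1 / 1024 * 4 ^ k) ≤ ((univ.filter fun x => F x ≠ g x).card : ℝ) := by
    have h2 : (((∑ z ∈ Q, (univ.filter fun w => F (jn M z w) ≠ g (jn M z w)).card) : ℕ) : ℝ)
      ≤ ((univ.filter fun x => F x ≠ g x).card : ℝ) := by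
      exact_mod_cast count_fibers M Q F g
    refine le_trans ?_ h2
    push_cast
    rw [← nsmul_eq_mul]
    exact Finset.card_nsmul_le_sum Q _ _ hQ
  refine le_trans ?_ h1
  have hQr : (Q.card : ℝ) = Nat.centralBinom k / 2 := by
    have : (2 : ℝ) * Q.card = Nat.centralBinom k := by exact_mod_cast hQc
    linarith
  have hn0 : (0:ℝ) < n := by exact_mod_cast (by omega : 0 < n)
  have hcb : (4:ℝ) ^ k ≤ √n * Nat.centralBinom k := by
    refine (pow_le_pow_iff_left₀ (by positivity) (by positivity) two_ne_zero).mp ?_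
    rw [mul_pow, Real.sq_sqrt hn0.le, ← pow_mul, mul_comm k 2, pow_mul]
    have := cb_lower k (by omega)
    norm_num
    rw [hn]
    exact_mod_cast this
  have h2n : (2:ℝ) ^ n = 4 ^ k * 4 ^ k := by
    rw [hn, pow_mul, ← mul_pow]; norm_num
  rw [hQr, h2n]
  have hs : 0 < √(n:ℝ) := Real.sqrt_pos.mpr hn0
  rw [div_mul_eq_mul_div, div_le_iff₀ hs]
  calc 1 / 2048 * ((4:ℝ) ^ k * 4 ^ k) ≤ 1 / 2048 * ((√n * Nat.centralBinom k) * 4 ^ k) := by gcongr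
    _ = _ := by ring

end Main

/-- every completion `F` of a `D⁻` instance is `Ω(1/√n)`-far
from unate. -/
theorem stmt14 : ∀ κ : ℝ, 0 < κ → κ < 1 / 2 →
    ∃ c : ℝ, 0 < c ∧ ∃ n₀ : ℕ, ∀ n : ℕ, n₀ ≤ n → 4 ∣ n →
    ∀ M : Finset (Fin n), M.card = n / 2 →
    ∀ P : Finset (↥M → Bool), P ⊆ PsiSet M → 2 * P.card = (PsiSet M).card →
    ∀ F : (Fin n → Bool) → Bool, DminusCompletion κ M P F →
    c / Real.sqrt n ≤ distUnate F := by
  intro κ h0 h1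
  obtain ⟨n₀, hn₀⟩ := erased_small κ h0 h1
  refine ⟨1 / 2048, by norm_num, max n₀ 400, ?_⟩
  intro n hn h4 M hM P hP hPc F hF
  obtain ⟨k, hk⟩ := h4
  have hn1 : n₀ ≤ 4 * k := by rw [← hk]; exact le_trans (le_max_left _ _) hn
  have hn2 : 400 ≤ n := le_trans (le_max_right _ _) hn
  unfold distUnate
  apply le_csInf
  · refine ⟨_, fun _ => false, ⟨fun _ => false, ?_⟩, rfl⟩
    intro x y _
    exact le_refl _
  · rintro d ⟨g, hg, rfl⟩
    rw [le_div_iff₀ (by positivity)]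
    exact final_count M k (by omega) hk κ hM (hn₀ k hn1) P hP hPc F hF g hg
end
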